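/- arXiv:0808.1403 — 9 statements merged into one kernel-verified Lean document; each statement's English description precedes it below -/
import Mathlib

section
/- For every integer m ≥ 2, the set D_m = {x ∈ S_m : the two-sided orbit O(x) = {σ^k(x) : k ∈ ℤ} is dense in S_m} is itself a dense subset of S_m. -/
/-- The solenoid `S_m` as a subgroup of the product group `∏_{i∈ℕ} 𝕋`. -/
noncomputable def solenoid (m : ℕ) : Subgroup (ℕ → Circle) where
  carrier := {x : ℕ → Circle | ∀ i : ℕ, x (i + 1) ^ m = x i}
  one_mem' := fun i => one_pow m
  mul_mem' := by
    intro a b ha hb i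
    simp only [Pi.mul_apply, mul_pow, ha i, hb i]
  inv_mem' := by
    intro a ha i
    simp only [Pi.inv_apply, inv_pow, ha i]

/-!
On `S_m` the inverse of the shift is the power map `x ↦ x ^ m`, so it is enough that the sequence
`k ↦ x ^ m ^ k` has dense range for a dense set of points `x`. By Baire category this follows from
topological transitivity of the power map. An open set of `S_m` around `u` contains all points whose
`n`-th coordinate lies in some neighbourhood `W` of `u n`. The `N`-th powers of the points of `W`
fill the whole circle once `N` is large, and every point of the circle is the `n`-th coordinate of
a point of `S_m`, so a suitable power of a point of the open set has any prescribed coordinate.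
-/

open Filter Set Topology TopologicalSpace

/-- Birkhoff's transitivity argument, for an arbitrary family of continuous maps. -/
theorem eventually_residual_dense_range {ι X Y : Type*} [TopologicalSpace X] [TopologicalSpace Y]
    [SecondCountableTopology Y] {f : ι → X → Y} (hf : ∀ i, Continuous (f i))
    (htrans : ∀ U V, IsOpen U → U.Nonempty → IsOpen V → V.Nonempty → ∃ i, ∃ x ∈ U, f i x ∈ V) :
    ∀ᶠ x in residual X, Dense (range fun i => f i x) := by
  have hbasis := isBasis_countableBasis Y
  have hvisit : ∀ V ∈ countableBasis Y, ∀ᶠ x in residual X, ∃ i, f i x ∈ V := by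
    intro V hV
    have hVo := hbasis.isOpen hV
    refine residual_of_dense_open ?_ (dense_iff_inter_open.2 fun U hU hUne => ?_)
    · simpa only [ofPred_exists] using! isOpen_iUnion fun i => hVo.preimage (hf i)
    · obtain ⟨i, x, hxU, hxV⟩ := htrans U V hU hUne hVo (nonempty_of_mem_countableBasis hV)
      exact ⟨x, hxU, i, hxV⟩
  filter_upwards [(eventually_countable_ball (countable_countableBasis Y)).2 hvisit] with x hx
  refine hbasis.dense_iff.2 fun V hV _ => ?_
  obtain ⟨i, hi⟩ := hx V hV
  exact ⟨f i x, hi, mem_range_self i⟩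

theorem mulAut_zpow_neg_apply_eq_pow {G : Type*} [Monoid G] {σ : MulAut G} {m : ℕ}
    (hσ : ∀ x, σ x ^ m = x) (k : ℕ) (x : G) : (σ ^ (-(k : ℤ))) x = x ^ m ^ k := by
  have hinv (y : G) : σ⁻¹ y = y ^ m := by
    simpa only [MulAut.apply_inv_self] using (hσ (σ⁻¹ y)).symm
  rw [zpow_neg, zpow_natCast, ← inv_pow]
  induction k with
  | zero => simp
  | succ k ih => rw [pow_succ', MulAut.mul_apply, ih, hinv, ← pow_mul, ← pow_succ]

theorem eventually_circle_pow_image_eq_univ {w : Circle} {W : Set Circle} (hW : W ∈ 𝓝 w) :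
    ∀ᶠ N : ℕ in atTop, (· ^ N) '' W = univ := by
  obtain ⟨a, rfl⟩ := Circle.exp_surjective w
  obtain ⟨b, hab, hsub⟩ : ∃ b > a, Ico a b ⊆ Circle.exp ⁻¹' W :=
    exists_Ico_subset_of_mem_nhds (Circle.exp.continuous.continuousAt hW) (exists_gt a)
  filter_upwards [eventually_gt_atTop 0,
    tendsto_natCast_atTop_atTop.eventually_ge_atTop (2 * Real.pi / (b - a))] with N hN0 hN
  have hNpos : (0 : ℝ) < N := Nat.cast_pos.2 hN0
  have hperiod : N * a + 2 * Real.pi ≤ N * b := by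
    rw [div_le_iff₀ (sub_pos.2 hab)] at hN
    linarith
  refine eq_univ_of_forall fun z => ?_
  obtain ⟨s, rfl⟩ := Circle.exp_surjective z
  obtain ⟨t, ⟨hat, htb⟩, hst⟩ :=
    Circle.periodic_exp.exists_mem_Ico Real.two_pi_pos s (N * a)
  have hmem : t / N ∈ Ico a b :=
    ⟨(le_div_iff₀' hNpos).2 hat, (div_lt_iff₀' hNpos).2 (htb.trans_le hperiod)⟩
  exact ⟨Circle.exp (t / N), hsub hmem, by
    simp only [← Circle.exp_natCast_mul, mul_div_cancel₀ t hNpos.ne', hst]⟩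

namespace solenoid

variable {m : ℕ}

theorem coord_add_pow (x : solenoid m) (i d : ℕ) : x.1 (i + d) ^ m ^ d = x.1 i := by
  induction d with
  | zero => simp
  | succ d ih => rw [pow_succ', pow_mul, ← add_assoc, x.2, ih]

theorem exists_coord_eq (hm : m ≠ 0) (n : ℕ) (w : Circle) : ∃ x : solenoid m, x.1 n = w := by
  obtain ⟨a, rfl⟩ := Circle.exp_surjective w
  have hm' : (m : ℝ) ≠ 0 := Nat.cast_ne_zero.2 hm
  refine ⟨⟨fun i => Circle.exp (m ^ n * a / m ^ i), fun i => ?_⟩, ?_⟩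
  · rw [← Circle.exp_natCast_mul]
    congr 1
    field_simp
    ring
  · simp only [mul_div_cancel_left₀ a (pow_ne_zero n hm')]

theorem mem_nhds_iff {x : solenoid m} {U : Set (solenoid m)} :
    U ∈ 𝓝 x ↔ ∃ n, ∃ W ∈ 𝓝 (x.1 n), (fun y : solenoid m => y.1 n) ⁻¹' W ⊆ U := by
  have hanti : Antitone fun n => comap (fun y : solenoid m => y.1 n) (𝓝 (x.1 n)) := by
    refine antitone_nat_of_succ_le fun n => ?_
    have hcoord : (fun y : solenoid m => y.1 n) = (· ^ m) ∘ fun y => y.1 (n + 1) :=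
      funext fun y => (y.2 n).symm
    rw [hcoord, ← comap_comap, ← x.2 n]
    exact comap_mono (continuous_pow m).continuousAt.le_comap
  rw [nhds_subtype, nhds_pi, Filter.pi, comap_iInf]
  simp only [comap_comap]
  exact mem_iInf_of_directed hanti.directed_ge U

theorem isClosed : IsClosed (solenoid m : Set (ℕ → Circle)) := by
  have hcarrier : (solenoid m : Set (ℕ → Circle)) = ⋂ i, {x | x (i + 1) ^ m = x i} :=
    ofPred_forall _
  rw [hcarrier]
  exact isClosed_iInter fun i => isClosed_eq (by fun_prop) (by fun_prop)

instance : CompactSpace (solenoid m) :=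
  isCompact_iff_compactSpace.1 isClosed.isCompact

instance : SecondCountableTopology (solenoid m) :=
  have : SecondCountableTopology Circle := IsEmbedding.subtypeVal.secondCountableTopology
  IsEmbedding.subtypeVal.secondCountableTopology

theorem exists_pow_mem (hm : 2 ≤ m) {U V : Set (solenoid m)} (hU : IsOpen U) (hUne : U.Nonempty)
    (hV : IsOpen V) (hVne : V.Nonempty) : ∃ k, ∃ x ∈ U, x ^ m ^ k ∈ V := by
  obtain ⟨u, hu⟩ := hUne
  obtain ⟨v, hv⟩ := hVne
  obtain ⟨n, W, hW, hWU⟩ := mem_nhds_iff.1 (hU.mem_nhds hu)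
  obtain ⟨l, W', hW', hWV⟩ := mem_nhds_iff.1 (hV.mem_nhds hv)
  have hpow : Tendsto (fun j => m ^ (n + j)) atTop atTop :=
    (tendsto_pow_atTop_atTop_of_one_lt hm).comp (tendsto_add_atTop_nat n |>.congr (add_comm · n))
  obtain ⟨j, hj⟩ := (hpow.eventually (eventually_circle_pow_image_eq_univ hW)).exists
  obtain ⟨w, hwW, hwv⟩ : v.1 l ∈ (· ^ m ^ (n + j)) '' W := hj ▸ mem_univ _
  obtain ⟨x, rfl⟩ := exists_coord_eq (m := m) (by lia) n w
  have hzero (i : ℕ) : x.1 i ^ m ^ i = x.1 0 := by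
    simpa only [zero_add] using coord_add_pow x 0 i
  have hcoord : (x ^ m ^ (l + j)).1 l = v.1 l := calc
    x.1 l ^ m ^ (l + j) = x.1 0 ^ m ^ j := by rw [pow_add, pow_mul, hzero]
    _ = x.1 n ^ m ^ (n + j) := by rw [pow_add, pow_mul, hzero]
    _ = v.1 l := hwv
  exact ⟨l + j, x, hWU hwW, hWV (mem_preimage.2 (hcoord ▸ mem_of_mem_nhds hW'))⟩

end solenoid

/-- For every integer `m ≥ 2`, the set
`D_m = {x ∈ S_m : the two-sided orbit O(x) = {σ^k(x) : k ∈ ℤ} is dense in S_m}`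
is itself a dense subset of `S_m`.  Here `σ` is the group automorphism of `S_m`
given by the shift `σ(x)_i = x_{i+1}`, so `σ^k` makes sense for all `k ∈ ℤ`. -/
theorem solenoid_dense_orbit_points_dense (m : ℕ) (hm : 2 ≤ m)
    (σ : MulAut ↥(solenoid m))
    (hσ : ∀ (x : ↥(solenoid m)) (i : ℕ),
      ((σ x : ℕ → Circle) i) = (x : ℕ → Circle) (i + 1)) :
    Dense {x : ↥(solenoid m) | Dense (Set.range fun k : ℤ => (σ ^ k) x)} := by
  have hroot (x : solenoid m) : σ x ^ m = x :=
    Subtype.ext <| funext fun i => (congrArg (· ^ m) (hσ x i)).trans (x.2 i)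
  have hpowers : ∀ᶠ x in residual (solenoid m), Dense (range fun k : ℕ => x ^ m ^ k) :=
    eventually_residual_dense_range (fun k => continuous_pow (m ^ k))
      fun _ _ => solenoid.exists_pow_mem hm
  refine (dense_of_mem_residual hpowers).mono fun x hx => hx.mono ?_
  exact range_subset_iff.2 fun k => ⟨-k, mulAut_zpow_neg_apply_eq_pow hroot k x⟩
end

section
/- Let m ≥ 1 and n ≥ 2 be integers with gcd(m, n) = 1. Then there exist bounded operators U and S on the Hilbert space ℓ²(ℤ[1/m]) such that U e_q = e_{q+1} and S e_q = e_{(n/m)q − 1} for every q ∈ ℤ[1/m]; moreover U is unitary, S is an isometry, and they satisfy the relations U^n S = S U^m and Σ_{i=0}^{n−1} U^i S S* U^{−i} = 1 (i.e., setting S_i = U^{i−1}S for i = 1, …, n, the operators z = U, S_1, …, S_n satisfy the defining relations of O_{(m,n)}(𝕋)). -/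
/-- `ℤ[1/m]`, the subring `{p/m^k : p ∈ ℤ, k ∈ ℕ}` of `ℚ`, as a set. -/
def zInvM (m : ℕ) : Set ℚ := {q : ℚ | ∃ (p : ℤ) (k : ℕ), q = (p : ℚ) / (m : ℚ) ^ k}

/-- The standard orthonormal basis vector `e_q` of `ℓ²(ℤ[1/m])`, indexed by rationals
(equal to `0` for `q ∉ ℤ[1/m]`; it is only ever used at points of `ℤ[1/m]`). -/
noncomputable def stdBasis (m : ℕ) (q : ℚ) : lp (fun _ : ↥(zInvM m) => ℂ) 2 :=
  haveI := Classical.dec (q ∈ zInvM m)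
  if h : q ∈ zInvM m then lp.single 2 (⟨q, h⟩ : ↥(zInvM m)) (1 : ℂ) else 0

/-!
Translation by `1` permutes `ℤ[1/m]`, and `q ↦ (n/m)q - 1` is injective on it, so both induce
isometries of `ℓ²(ℤ[1/m])` which permute the standard basis; the relation `U^n S = S U^m` holds on
basis vectors because `(n/m)(q + m) - 1 = ((n/m)q - 1) + n`.  The operator `U^i S (U^i S)^*` is the
projection onto the span of the `e_q` with `q` in the `i`-th translate of the image
`nℤ[1/m] - 1`.  As `m` and `n` are coprime, `ℤ[1/m] / nℤ[1/m]` is cyclic of order `n`, generated by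
`1`, so these `n` translates partition `ℤ[1/m]` and the projections sum to `1`.
-/

section HilbertBasisOperators

open ContinuousLinearMap

variable {𝕜 E F G ι κ : Type*} [RCLike 𝕜] [NormedAddCommGroup E] [InnerProductSpace 𝕜 E]
  [NormedAddCommGroup F] [InnerProductSpace 𝕜 F]

theorem ext_hilbertBasis [NormedAddCommGroup G] [NormedSpace 𝕜 G] (b : HilbertBasis ι 𝕜 E)
    {A B : E →L[𝕜] G} (h : ∀ i, A (b i) = B (b i)) : A = B :=
  ext_on (Submodule.dense_iff_topologicalClosure_eq_top.mpr b.dense_span)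
    (Set.eqOn_range.mpr (funext h))

variable [CompleteSpace F]

/-- The isometry mapping `b i` to `c (f i)`, for Hilbert bases `b`, `c` and an embedding `f` of
their index types. -/
noncomputable def basisIsometry (b : HilbertBasis ι 𝕜 E) (c : HilbertBasis κ 𝕜 F) (f : ι ↪ κ) :
    E →ₗᵢ[𝕜] F :=
  (c.orthonormal.comp f f.injective).orthogonalFamily.linearIsometry.comp
    b.repr.toLinearIsometry

theorem basisIsometry_apply (b : HilbertBasis ι 𝕜 E) (c : HilbertBasis κ 𝕜 F) (f : ι ↪ κ) (i : ι) :
    basisIsometry b c f (b i) = c (f i) := by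
  classical
  simp [basisIsometry, b.repr_self, OrthogonalFamily.linearIsometry_apply_single]

variable [CompleteSpace E] {b : HilbertBasis ι 𝕜 E} {c : HilbertBasis κ 𝕜 F}

theorem repr_adjoint_apply {A : E →L[𝕜] F} {f : ι → κ} (hA : ∀ i, A (b i) = c (f i))
    (v : F) (i : ι) : b.repr (adjoint A v) i = c.repr v (f i) := by
  rw [b.repr_apply_apply, adjoint_inner_right, hA, c.repr_apply_apply]

theorem adjoint_apply_basis {A : E →L[𝕜] F} {f : ι → κ} (hA : ∀ i, A (b i) = c (f i))
    (hf : f.Injective) (i : ι) : adjoint A (c (f i)) = b i := by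
  classical
  refine b.repr.injective (lp.ext <| funext fun j => ?_)
  rw [repr_adjoint_apply hA, c.repr_self, b.repr_self]
  simp [Pi.single_apply, hf.eq_iff]

theorem adjoint_apply_basis_of_notMem_range {A : E →L[𝕜] F} {f : ι → κ}
    (hA : ∀ i, A (b i) = c (f i)) {k : κ} (hk : k ∉ Set.range f) : adjoint A (c k) = 0 := by
  classical
  refine b.repr.injective (lp.ext <| funext fun j => ?_)
  rw [repr_adjoint_apply hA, c.repr_self, map_zero]
  exact Pi.single_eq_of_ne (fun h => hk ⟨j, h⟩) _

theorem sum_comp_adjoint_eq_one {τ : Type*} [Fintype τ] {A : τ → E →L[𝕜] F} {f : τ → ι → κ}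
    (hA : ∀ t i, A t (b i) = c (f t i)) (hf : Function.Bijective fun p : τ × ι => f p.1 p.2) :
    ∑ t, A t ∘L adjoint (A t) = 1 := by
  refine ext_hilbertBasis c fun k => ?_
  obtain ⟨⟨t, i⟩, rfl⟩ := hf.surjective k
  have f_injective : (f t).Injective := hf.injective.comp (Prod.mk_right_injective t)
  have notMem_range (s : τ) (hs : s ≠ t) : f t i ∉ Set.range (f s) := by
    rintro ⟨j, hj⟩
    exact hs (congrArg Prod.fst (hf.injective (a₁ := (s, j)) (a₂ := (t, i)) hj))
  calc (∑ s, A s ∘L adjoint (A s)) (c (f t i))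
      = ∑ s, A s (adjoint (A s) (c (f t i))) := by simp only [sum_apply, comp_apply]
    _ = A t (adjoint (A t) (c (f t i))) := Fintype.sum_eq_single t fun s hs => by
      rw [adjoint_apply_basis_of_notMem_range (hA s) (notMem_range s hs), map_zero]
    _ = c (f t i) := by rw [adjoint_apply_basis (hA t) f_injective, hA]

theorem mem_unitary_of_apply_basis {U : E →L[𝕜] E} {f : Equiv.Perm ι}
    (hU : ∀ i, U (b i) = b (f i)) : U ∈ unitary (E →L[𝕜] E) := by
  refine Unitary.mem_iff.mpr ⟨ext_hilbertBasis b fun i => ?_, ext_hilbertBasis b fun i => ?_⟩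
  · rw [mul_apply_eq_comp, hU, star_eq_adjoint, adjoint_apply_basis hU f.injective,
      one_apply_eq_self]
  · obtain ⟨j, rfl⟩ := f.surjective i
    rw [mul_apply_eq_comp, star_eq_adjoint, adjoint_apply_basis hU f.injective, hU,
      one_apply_eq_self]

theorem exists_unitary_isometry_relations (b : HilbertBasis ι 𝕜 E) (f : Equiv.Perm ι) (g : ι ↪ ι)
    {m n : ℕ} (hfg : ∀ i, (f ^ n) (g i) = g ((f ^ m) i))
    (hpart : Function.Bijective fun p : Fin n × ι => (f ^ (p.1 : ℕ)) (g p.2)) :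
    ∃ U S : E →L[𝕜] E, (∀ i, U (b i) = b (f i)) ∧ (∀ i, S (b i) = b (g i)) ∧
      U ∈ unitary (E →L[𝕜] E) ∧ (∀ v, ‖S v‖ = ‖v‖) ∧ U ^ n * S = S * U ^ m ∧
      ∑ i ∈ Finset.range n, U ^ i * S * star S * star (U ^ i) = 1 := by
  let U : E →L[𝕜] E := (basisIsometry b b f.toEmbedding).toContinuousLinearMap
  let S : E →L[𝕜] E := (basisIsometry b b g).toContinuousLinearMap
  have hU (i : ι) : U (b i) = b (f i) := basisIsometry_apply b b f.toEmbedding i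
  have hS (i : ι) : S (b i) = b (g i) := basisIsometry_apply b b g i
  have hUpow (k : ℕ) (i : ι) : (U ^ k) (b i) = b ((f ^ k) i) := by
    have semiconj : Function.Semiconj b f U := fun i => (hU i).symm
    rw [FunLike.coe_pow_eq_iterate, ← Equiv.Perm.iterate_eq_pow, semiconj.iterate_right k i]
  have hUS (k : ℕ) (i : ι) : (U ^ k * S) (b i) = b ((f ^ k) (g i)) := by
    rw [mul_apply_eq_comp, hS, hUpow]
  refine ⟨U, S, hU, hS, mem_unitary_of_apply_basis hU, (basisIsometry b b g).norm_map,
    ext_hilbertBasis b fun i => ?_, ?_⟩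
  · rw [hUS, mul_apply_eq_comp, hUpow, hS, hfg]
  · calc ∑ i ∈ Finset.range n, U ^ i * S * star S * star (U ^ i)
        = ∑ i : Fin n, (U ^ (i : ℕ) * S) * star (U ^ (i : ℕ) * S) := by
          simp only [Finset.sum_range, star_mul, mul_assoc]
      _ = 1 := sum_comp_adjoint_eq_one (fun i => hUS i) hpart

end HilbertBasisOperators

section Arithmetic

variable {m n : ℕ}

/-- `ℤ[1/m]` as a subring of `ℚ`, giving access to the closure properties of `zInvM m`. -/
def zInvMSubring (hm : m ≠ 0) : Subring ℚ where
  carrier := zInvM m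
  zero_mem' := ⟨0, 0, by simp⟩
  one_mem' := ⟨1, 0, by simp⟩
  add_mem' := by
    rintro _ _ ⟨p, k, rfl⟩ ⟨p', k', rfl⟩
    refine ⟨p * m ^ k' + p' * m ^ k, k + k', ?_⟩
    have : (m : ℚ) ≠ 0 := mod_cast hm
    push_cast
    rw [pow_add]
    field_simp
  mul_mem' := by
    rintro _ _ ⟨p, k, rfl⟩ ⟨p', k', rfl⟩
    exact ⟨p * p', k + k', by push_cast; rw [div_mul_div_comm, pow_add]⟩
  neg_mem' := by
    rintro _ ⟨p, k, rfl⟩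
    exact ⟨-p, k, by push_cast; rw [neg_div]⟩

theorem div_natCast_mem_zInvM (hm : m ≠ 0) {q : ℚ} (hq : q ∈ zInvM m) : q / m ∈ zInvM m := by
  rw [div_eq_mul_inv]
  exact (zInvMSubring hm).mul_mem hq ⟨1, 1, by simp⟩

theorem natCast_dvd_of_intCast_div_mem_zInvM (hm : m ≠ 0) (hn : n ≠ 0) (hmn : m.Coprime n) {a : ℤ}
    (ha : (a : ℚ) / n ∈ zInvM m) : (n : ℤ) ∣ a := by
  obtain ⟨p, k, h⟩ := ha
  have hmk : (m : ℚ) ^ k ≠ 0 := pow_ne_zero k (mod_cast hm)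
  rw [div_eq_div_iff (mod_cast hn) hmk] at h
  have coprime_pow : IsCoprime (n : ℤ) ((m : ℤ) ^ k) :=
    (Nat.isCoprime_iff_coprime.mpr hmn.symm).pow_right
  exact coprime_pow.dvd_of_dvd_mul_right ⟨p, by rw [mul_comm (n : ℤ)]; exact_mod_cast h⟩

theorem exists_fin_sub_div_mem_zInvM (hm : m ≠ 0) (hn : n ≠ 0) (hmn : m.Coprime n) {q : ℚ}
    (hq : q ∈ zInvM m) : ∃ i : Fin n, (q - i) / n ∈ zInvM m := by
  obtain ⟨p, k, rfl⟩ := hq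
  obtain ⟨a, b, hab⟩ : IsCoprime ((m : ℤ) ^ k) (n : ℤ) :=
    (Nat.isCoprime_iff_coprime.mpr hmn).pow_left
  -- As `a` inverts `m ^ k` modulo `n`, the quotient `p / m ^ k` has residue `p * a`.
  obtain ⟨i, hi_lt, hi⟩ := Int.existsUnique_equiv_nat (p * a) (b := n) (by positivity)
  obtain ⟨t, ht⟩ : (n : ℤ) ∣ p - i * m ^ k := by
    obtain ⟨s, hs⟩ := hi.dvd
    exact ⟨s * m ^ k + p * b, by linear_combination (m : ℤ) ^ k * hs - p * hab⟩
  refine ⟨⟨i, mod_cast hi_lt⟩, t, k, ?_⟩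
  have ht' : (p : ℚ) - i * m ^ k = n * t := mod_cast ht
  have : (m : ℚ) ≠ 0 := mod_cast hm
  have : (n : ℚ) ≠ 0 := mod_cast hn
  field_simp
  linear_combination ht'

theorem fin_eq_of_sub_div_mem_zInvM (hm : m ≠ 0) (hmn : m.Coprime n) {q : ℚ} {i j : Fin n}
    (hi : (q - i) / n ∈ zInvM m) (hj : (q - j) / n ∈ zInvM m) : i = j := by
  have sub_div_mem : (((j : ℤ) - (i : ℤ) : ℤ) : ℚ) / n ∈ zInvM m := by
    have difference : (((j : ℤ) - (i : ℤ) : ℤ) : ℚ) / n = (q - i) / n - (q - j) / n := by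
      push_cast
      ring
    exact difference ▸ (zInvMSubring hm).sub_mem hi hj
  have dvd := natCast_dvd_of_intCast_div_mem_zInvM hm i.pos.ne' hmn sub_div_mem
  have := Int.eq_zero_of_abs_lt_dvd dvd (by rw [abs_lt]; omega)
  omega

/-- Translation by `1` on `ℤ[1/m]`, the permutation inducing `U`. -/
def zInvMSucc (hm : m ≠ 0) : Equiv.Perm (zInvM m) :=
  (Equiv.addRight (1 : ℚ)).subtypePerm fun _ =>
    (zInvMSubring hm).toAddSubgroup.add_mem_cancel_right (zInvMSubring hm).one_mem

theorem coe_zInvMSucc (hm : m ≠ 0) (q : zInvM m) : (zInvMSucc hm q : ℚ) = q + 1 :=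
  rfl

theorem coe_zInvMSucc_pow (hm : m ≠ 0) (k : ℕ) (q : zInvM m) :
    ((zInvMSucc hm ^ k) q : ℚ) = q + k := by
  induction k with
  | zero => simp
  | succ k ih =>
    rw [pow_succ', Equiv.Perm.mul_apply, coe_zInvMSucc, ih, Nat.cast_succ, add_assoc]

/-- The map `q ↦ (n/m)q - 1` on `ℤ[1/m]`, inducing `S`. -/
def zInvMAffine (hm : m ≠ 0) (hn : n ≠ 0) : zInvM m ↪ zInvM m where
  toFun q := ⟨n / m * q - 1, by
    rw [div_mul_eq_mul_div, mul_div_assoc]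
    let R := zInvMSubring hm
    exact R.sub_mem (R.mul_mem (natCast_mem R n) (div_natCast_mem_zInvM hm q.2)) R.one_mem⟩
  inj' x y hxy := by
    have hnm : (n / m : ℚ) ≠ 0 := div_ne_zero (mod_cast hn) (mod_cast hm)
    exact Subtype.ext (mul_left_cancel₀ hnm (sub_left_injective (congrArg Subtype.val hxy)))

theorem coe_zInvMAffine (hm : m ≠ 0) (hn : n ≠ 0) (q : zInvM m) :
    (zInvMAffine hm hn q : ℚ) = n / m * q - 1 :=
  rfl

theorem zInvMSucc_pow_zInvMAffine (hm : m ≠ 0) (hn : n ≠ 0) (q : zInvM m) :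
    (zInvMSucc hm ^ n) (zInvMAffine hm hn q) = zInvMAffine hm hn ((zInvMSucc hm ^ m) q) := by
  ext
  have : (m : ℚ) ≠ 0 := mod_cast hm
  simp only [coe_zInvMAffine, coe_zInvMSucc_pow]
  field_simp
  ring

theorem zInvMSucc_pow_zInvMAffine_eq_iff (hm : m ≠ 0) (hn : n ≠ 0) (i : ℕ) (x y : zInvM m) :
    (zInvMSucc hm ^ i) (zInvMAffine hm hn x) = y ↔ (y + 1 - i : ℚ) / n = x / m := by
  have hm' : (m : ℚ) ≠ 0 := mod_cast hm
  have hn' : (n : ℚ) ≠ 0 := mod_cast hn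
  rw [← Subtype.coe_inj, coe_zInvMSucc_pow, coe_zInvMAffine]
  field_simp
  constructor <;> intro h <;> linear_combination -h

theorem bijective_zInvMSucc_pow_zInvMAffine (hm : m ≠ 0) (hn : n ≠ 0) (hmn : m.Coprime n) :
    Function.Bijective fun p : Fin n × zInvM m =>
      (zInvMSucc hm ^ (p.1 : ℕ)) (zInvMAffine hm hn p.2) := by
  refine ⟨fun ⟨i, x⟩ ⟨j, x'⟩ h => ?_, fun y => ?_⟩
  · have quot_i := (zInvMSucc_pow_zInvMAffine_eq_iff hm hn i x _).mp h
    have quot_j := (zInvMSucc_pow_zInvMAffine_eq_iff hm hn j x' _).mp rfl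
    obtain rfl : i = j := fin_eq_of_sub_div_mem_zInvM hm hmn
      (quot_i ▸ div_natCast_mem_zInvM hm x.2) (quot_j ▸ div_natCast_mem_zInvM hm x'.2)
    exact Prod.ext rfl ((zInvMAffine hm hn).injective (Equiv.injective _ h))
  · obtain ⟨i, hi⟩ := exists_fin_sub_div_mem_zInvM hm hn hmn
      ((zInvMSubring hm).add_mem y.2 (zInvMSubring hm).one_mem)
    let x : zInvM m := ⟨(y + 1 - i) / n * m, (zInvMSubring hm).mul_mem hi (natCast_mem _ m)⟩
    refine ⟨(i, x), (zInvMSucc_pow_zInvMAffine_eq_iff hm hn i x y).mpr ?_⟩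
    exact (mul_div_cancel_right₀ _ (mod_cast hm)).symm

end Arithmetic

/-- The standard Hilbert basis of `ℓ²(ℤ[1/m])`, indexed by `ℤ[1/m]` itself rather than by `ℚ` as
`stdBasis` is. -/
noncomputable def zInvMHilbertBasis (m : ℕ) :
    HilbertBasis (zInvM m) ℂ (lp (fun _ : zInvM m => ℂ) 2) :=
  default

theorem stdBasis_coe {m : ℕ} (q : zInvM m) : stdBasis m q = zInvMHilbertBasis m q := by
  rw [← HilbertBasis.repr_symm_single, stdBasis, dif_pos q.2]
  rfl

/-- Let `m ≥ 1` and `n ≥ 2` be integers with `gcd(m,n) = 1`.  Then there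
exist bounded operators `U` and `S` on `ℓ²(ℤ[1/m])` such that `U e_q = e_{q+1}` and
`S e_q = e_{(n/m)q − 1}` for every `q ∈ ℤ[1/m]`; moreover `U` is unitary, `S` is an
isometry, and `U^n S = S U^m` and `Σ_{i=0}^{n−1} U^i S S* U^{−i} = 1`, i.e. `z = U`
and `S_i = U^{i−1} S` satisfy the defining relations of `O_{(m,n)}(𝕋)`. -/
theorem exists_representation_circle_correspondence_relations
    (m n : ℕ) (hm : 1 ≤ m) (hn : 2 ≤ n) (hmn : Nat.Coprime m n) :
    ∃ U S : lp (fun _ : ↥(zInvM m) => ℂ) 2 →L[ℂ] lp (fun _ : ↥(zInvM m) => ℂ) 2,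
      (∀ q : ℚ, q ∈ zInvM m → U (stdBasis m q) = stdBasis m (q + 1)) ∧
      (∀ q : ℚ, q ∈ zInvM m →
        S (stdBasis m q) = stdBasis m ((n : ℚ) / (m : ℚ) * q - 1)) ∧
      U ∈ unitary (lp (fun _ : ↥(zInvM m) => ℂ) 2 →L[ℂ] lp (fun _ : ↥(zInvM m) => ℂ) 2) ∧
      (∀ v, ‖S v‖ = ‖v‖) ∧
      U ^ n * S = S * U ^ m ∧
      ∑ i ∈ Finset.range n, U ^ i * S * star S * star (U ^ i) = 1 := by
  have hm' : m ≠ 0 := by omega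
  have hn' : n ≠ 0 := by omega
  obtain ⟨U, S, hU, hS, relations⟩ := exists_unitary_isometry_relations (zInvMHilbertBasis m)
    (zInvMSucc hm') (zInvMAffine hm' hn') (zInvMSucc_pow_zInvMAffine hm' hn')
    (bijective_zInvMSucc_pow_zInvMAffine hm' hn' hmn)
  refine ⟨U, S, fun q hq => ?_, fun q hq => ?_, relations⟩
  · simpa only [← stdBasis_coe, coe_zInvMSucc] using hU ⟨q, hq⟩
  · simpa only [← stdBasis_coe, coe_zInvMAffine] using hS ⟨q, hq⟩
end

section
/- Let m ≥ 1 and n ≥ 2 be integers with gcd(m, n) = 1. Let U, S, W be bounded operators on ℓ²(ℤ[1/m]) satisfying U e_q = e_{q+1}, S e_q = e_{(n/m)q}, and W e_q = e_{−q} for all q ∈ ℤ[1/m]. Then W is a self-adjoint unitary satisfying W U W = U* and W S = S W, and W does not belong to the norm closure of the star subalgebra of bounded operators on ℓ²(ℤ[1/m]) generated by U and S. -/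
/-!
Matrix coefficients of `U`, `S` and of scalars sit on graphs of strictly increasing maps. Passing to
adjoints, products and sums only inverts, composes and collects such graphs, so the matrix of any
operator in the star algebra generated by `U` and `S` is supported on finitely many order-preserving
partial bijections. The graph of the decreasing map `q ↦ -q` meets each of these in at most one
point, and it is infinite: hence some matrix coefficient of `W` equal to `1` faces a coefficient `0`
of the given operator, which is therefore at distance at least `1` from `W`.
-/

open scoped InnerProductSpace SetRel

section PartialOrderIso

variable {α β γ : Type*}

/-- A relation between two linear orders which is the graph of a partial order isomorphism, that is,
of an order isomorphism between a subset of `α` and a subset of `β`. For linear orders the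
equivalence below already makes the relation single-valued in both directions. -/
def IsPartialOrderIso [LT α] [LT β] (R : SetRel α β) : Prop :=
  ∀ ⦃a b a' b'⦄, a ~[R] b → a' ~[R] b' → (a < a' ↔ b < b')

namespace IsPartialOrderIso

lemma inv [LT α] [LT β] {R : SetRel α β} (hR : IsPartialOrderIso R) : IsPartialOrderIso R.inv :=
  fun _ _ _ _ h h' => (hR h h').symm

lemma comp [LT α] [LT β] [LT γ] {R : SetRel α β} {S : SetRel β γ} (hR : IsPartialOrderIso R)
    (hS : IsPartialOrderIso S) : IsPartialOrderIso (R ○ S) :=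
  fun _ _ _ _ ⟨_, hab, hbc⟩ ⟨_, hab', hbc'⟩ => (hR hab hab').trans (hS hbc hbc')

lemma of_strictMono [LinearOrder α] [Preorder β] {f : α → β} (hf : StrictMono f) :
    IsPartialOrderIso f.graph := by
  rintro a _ a' _ rfl rfl
  exact hf.lt_iff_lt.symm

lemma subsingleton_inter_strictAnti [LinearOrder α] [Preorder β] {R : SetRel α β}
    (hR : IsPartialOrderIso R) {w : α → β} (hw : StrictAnti w) :
    {a | a ~[R] w a}.Subsingleton := by
  have not_lt : ∀ ⦃a a'⦄, a ~[R] w a → a' ~[R] w a' → ¬a < a' :=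
    fun a a' ha ha' hlt => (hw hlt).asymm ((hR ha ha').1 hlt)
  exact fun a ha a' ha' => le_antisymm (le_of_not_gt (not_lt ha' ha)) (le_of_not_gt (not_lt ha ha'))

end IsPartialOrderIso

/-- A relation contained in a finite union of graphs of partial order isomorphisms. -/
def IsFinitelyMonotone [LT α] [LT β] (R : SetRel α β) : Prop :=
  ∃ 𝒮 : Set (SetRel α β), 𝒮.Finite ∧ (∀ S ∈ 𝒮, IsPartialOrderIso S) ∧ R ⊆ ⋃₀ 𝒮

lemma IsPartialOrderIso.isFinitelyMonotone [LT α] [LT β] {R : SetRel α β}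
    (hR : IsPartialOrderIso R) : IsFinitelyMonotone R :=
  ⟨{R}, Set.finite_singleton R, by simpa using hR, by simp⟩

namespace IsFinitelyMonotone

lemma mono [LT α] [LT β] {R S : SetRel α β} (hS : IsFinitelyMonotone S) (hRS : R ⊆ S) :
    IsFinitelyMonotone R :=
  let ⟨𝒮, hfin, hiso, hcover⟩ := hS
  ⟨𝒮, hfin, hiso, hRS.trans hcover⟩

lemma union [LT α] [LT β] {R S : SetRel α β} (hR : IsFinitelyMonotone R)
    (hS : IsFinitelyMonotone S) : IsFinitelyMonotone (R ∪ S) := by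
  obtain ⟨ℛ, hℛ, hℛiso, hRℛ⟩ := hR
  obtain ⟨𝒮, h𝒮, h𝒮iso, hS𝒮⟩ := hS
  refine ⟨ℛ ∪ 𝒮, hℛ.union h𝒮, fun T hT => hT.elim (hℛiso T) (h𝒮iso T), ?_⟩
  rw [Set.sUnion_union]
  exact Set.union_subset_union hRℛ hS𝒮

lemma inv [LT α] [LT β] {R : SetRel α β} (hR : IsFinitelyMonotone R) :
    IsFinitelyMonotone R.inv := by
  obtain ⟨ℛ, hℛ, hiso, hcover⟩ := hR
  refine ⟨SetRel.inv '' ℛ, hℛ.image _, Set.forall_mem_image.2 fun S hS => (hiso S hS).inv, ?_⟩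
  intro p hp
  obtain ⟨S, hS, hpS⟩ := hcover hp
  exact ⟨SetRel.inv S, Set.mem_image_of_mem _ hS, hpS⟩

lemma comp [LT α] [LT β] [LT γ] {R : SetRel α β} {S : SetRel β γ} (hR : IsFinitelyMonotone R)
    (hS : IsFinitelyMonotone S) : IsFinitelyMonotone (R ○ S) := by
  obtain ⟨ℛ, hℛ, hℛiso, hRℛ⟩ := hR
  obtain ⟨𝒮, h𝒮, h𝒮iso, hS𝒮⟩ := hS
  refine ⟨Set.image2 SetRel.comp ℛ 𝒮, hℛ.image2 _ h𝒮,
    Set.forall_mem_image2.2 fun T hT T' hT' => (hℛiso T hT).comp (h𝒮iso T' hT'), ?_⟩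
  rintro ⟨a, c⟩ ⟨b, hab, hbc⟩
  obtain ⟨T, hT, habT⟩ := hRℛ hab
  obtain ⟨T', hT', hbcT'⟩ := hS𝒮 hbc
  exact ⟨T ○ T', Set.mem_image2_of_mem hT hT', b, habT, hbcT'⟩

lemma exists_notMem_of_strictAnti [LinearOrder α] [Infinite α] [Preorder β] {R : SetRel α β}
    (hR : IsFinitelyMonotone R) {w : α → β} (hw : StrictAnti w) : ∃ a, (a, w a) ∉ R := by
  obtain ⟨ℛ, hℛ, hiso, hcover⟩ := hR
  have hfin : (⋃ S ∈ ℛ, {a | a ~[S] w a}).Finite :=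
    hℛ.biUnion fun S hS => ((hiso S hS).subsingleton_inter_strictAnti hw).finite
  obtain ⟨a, ha⟩ := hfin.exists_notMem
  refine ⟨a, fun haR => ha ?_⟩
  obtain ⟨S, hS, haS⟩ := hcover haR
  exact Set.mem_biUnion hS haS

end IsFinitelyMonotone

end PartialOrderIso

section HilbertBasis

variable {𝕜 ι H : Type*} [RCLike 𝕜] [NormedAddCommGroup H] [InnerProductSpace 𝕜 H]

lemma continuousLinearMap_ext_hilbertBasis (b : HilbertBasis ι 𝕜 H) {A B : H →L[𝕜] H}
    (h : ∀ q, A (b q) = B (b q)) : A = B :=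
  ContinuousLinearMap.ext_on (Submodule.dense_iff_topologicalClosure_eq_top.2 b.dense_span)
    (Set.forall_mem_range.2 h)

lemma ext_inner_hilbertBasis (b : HilbertBasis ι 𝕜 H) {x y : H}
    (h : ∀ r, ⟪b r, x⟫_𝕜 = ⟪b r, y⟫_𝕜) : x = y := by
  refine b.repr.injective (lp.ext (funext fun r => ?_))
  simpa only [b.repr_apply_apply] using h r

/-- The positions `(q, r)` of the nonzero entries of the matrix of `A`, where `q` is the column and
`r` the row, so that an operator `b q ↦ b (f q)` is supported on the graph of `f`. -/
def matrixSupport (b : HilbertBasis ι 𝕜 H) (A : H →L[𝕜] H) : SetRel ι ι :=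
  {p | ⟪b p.2, A (b p.1)⟫_𝕜 ≠ 0}

lemma matrixSupport_add_subset (b : HilbertBasis ι 𝕜 H) (A B : H →L[𝕜] H) :
    matrixSupport b (A + B) ⊆ matrixSupport b A ∪ matrixSupport b B := by
  rintro ⟨q, r⟩ h
  contrapose! h
  simp_all [matrixSupport, inner_add_right]

lemma matrixSupport_subset_graph (b : HilbertBasis ι 𝕜 H) {A : H →L[𝕜] H} {f : ι → ι} {c : 𝕜}
    (hA : ∀ q, A (b q) = c • b (f q)) : matrixSupport b A ⊆ f.graph := by
  rintro ⟨q, r⟩ h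
  by_contra hne
  apply h
  rw [hA, inner_smul_right, b.orthonormal.inner_eq_zero (Ne.symm hne), mul_zero]

lemma one_le_norm_of_inner_eq_one (b : HilbertBasis ι 𝕜 H) {A : H →L[𝕜] H} {q r : ι}
    (h : ⟪b r, A (b q)⟫_𝕜 = 1) : 1 ≤ ‖A‖ :=
  calc
    1 = ‖⟪b r, A (b q)⟫_𝕜‖ := by rw [h, norm_one]
    _ ≤ ‖b r‖ * ‖A (b q)‖ := norm_inner_le_norm _ _
    _ ≤ ‖b r‖ * (‖A‖ * ‖b q‖) := by gcongr; exact A.le_opNorm _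
    _ = ‖A‖ := by simp [b.orthonormal.norm_eq_one]

variable [CompleteSpace H]

lemma matrixSupport_star (b : HilbertBasis ι 𝕜 H) (A : H →L[𝕜] H) :
    matrixSupport b (star A) = (matrixSupport b A).inv := by
  ext ⟨q, r⟩
  change ⟪b r, star A (b q)⟫_𝕜 ≠ 0 ↔ ⟪b q, A (b r)⟫_𝕜 ≠ 0
  rw [ContinuousLinearMap.star_eq_adjoint, ContinuousLinearMap.adjoint_inner_right, ne_eq,
    inner_eq_zero_symm]

lemma matrixSupport_mul_subset (b : HilbertBasis ι 𝕜 H) (A B : H →L[𝕜] H) :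
    matrixSupport b (A * B) ⊆ matrixSupport b B ○ matrixSupport b A := by
  rintro ⟨q, r⟩ h
  have expand : ⟪b r, (A * B) (b q)⟫_𝕜 = ∑' s, ⟪b r, A (b s)⟫_𝕜 * ⟪b s, B (b q)⟫_𝕜 := by
    simp only [← A.adjoint_inner_left, b.tsum_inner_mul_inner]
    exact (A.adjoint_inner_left _ _).symm
  obtain ⟨s, hs⟩ : ∃ s, ⟪b r, A (b s)⟫_𝕜 * ⟪b s, B (b q)⟫_𝕜 ≠ 0 := by
    by_contra! hzero
    exact h (by simp only [expand, hzero, tsum_zero])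
  exact ⟨s, right_ne_zero_of_mul hs, left_ne_zero_of_mul hs⟩

lemma star_eq_of_basis_perm (b : HilbertBasis ι 𝕜 H) {A B : H →L[𝕜] H} (f : Equiv.Perm ι)
    (hA : ∀ q, A (b q) = b (f q)) (hB : ∀ q, B (b q) = b (f.symm q)) : star A = B := by
  classical
  refine continuousLinearMap_ext_hilbertBasis b fun q => ext_inner_hilbertBasis b fun r => ?_
  rw [ContinuousLinearMap.star_eq_adjoint, ContinuousLinearMap.adjoint_inner_right, hA, hB]
  simp only [orthonormal_iff_ite.1 b.orthonormal, f.eq_symm_apply]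

/-- The star algebra of the operators whose matrix is supported on finitely many graphs of partial
order isomorphisms of the index set. -/
def finitelyMonotoneOperators [LinearOrder ι] (b : HilbertBasis ι 𝕜 H) :
    StarSubalgebra 𝕜 (H →L[𝕜] H) where
  carrier := {A | IsFinitelyMonotone (matrixSupport b A)}
  mul_mem' {A B} hA hB := (hB.comp hA).mono (matrixSupport_mul_subset b A B)
  add_mem' {A B} hA hB := (hA.union hB).mono (matrixSupport_add_subset b A B)
  algebraMap_mem' c := (IsPartialOrderIso.of_strictMono strictMono_id).isFinitelyMonotone.mono
    (matrixSupport_subset_graph b (c := c) fun _ => rfl)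
  star_mem' {A} hA := by
    rw [Set.mem_ofPred_eq, matrixSupport_star]
    exact hA.inv

lemma mem_finitelyMonotoneOperators_of_strictMono [LinearOrder ι] (b : HilbertBasis ι 𝕜 H)
    {A : H →L[𝕜] H} {f : ι → ι} (hf : StrictMono f) (hA : ∀ q, A (b q) = b (f q)) :
    A ∈ finitelyMonotoneOperators b :=
  (IsPartialOrderIso.of_strictMono hf).isFinitelyMonotone.mono
    (matrixSupport_subset_graph b (c := 1) (by simpa only [one_smul] using hA))

lemma one_le_norm_sub_of_strictAnti [LinearOrder ι] [Infinite ι] (b : HilbertBasis ι 𝕜 H)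
    {W A : H →L[𝕜] H} {w : ι → ι} (hw : StrictAnti w) (hW : ∀ q, W (b q) = b (w q))
    (hA : A ∈ finitelyMonotoneOperators b) : 1 ≤ ‖W - A‖ := by
  obtain ⟨q, hq⟩ := IsFinitelyMonotone.exists_notMem_of_strictAnti hA hw
  have hAq : ⟪b (w q), A (b q)⟫_𝕜 = 0 := not_not.1 hq
  refine one_le_norm_of_inner_eq_one b (q := q) (r := w q) ?_
  rw [sub_apply, inner_sub_right, hAq, hW, sub_zero,
    inner_self_eq_norm_sq_to_K, b.orthonormal.norm_eq_one]
  simp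

lemma notMem_closure_finitelyMonotoneOperators_of_strictAnti [LinearOrder ι] [Infinite ι]
    (b : HilbertBasis ι 𝕜 H) {W : H →L[𝕜] H} {w : ι → ι} (hw : StrictAnti w)
    (hW : ∀ q, W (b q) = b (w q)) :
    W ∉ closure (finitelyMonotoneOperators b : Set (H →L[𝕜] H)) := by
  intro hcl
  obtain ⟨A, hA, hdist⟩ := Metric.mem_closure_iff.1 hcl 1 one_pos
  rw [dist_eq_norm] at hdist
  exact hdist.not_ge (one_le_norm_sub_of_strictAnti b hw hW hA)

end HilbertBasis

theorem flip_not_in_closure_of_generated_star_subalgebra_general {𝕜 Γ H : Type*} [RCLike 𝕜]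
    [AddCommGroup Γ] [LinearOrder Γ] [IsOrderedAddMonoid Γ] [Nontrivial Γ]
    [NormedAddCommGroup H] [InnerProductSpace 𝕜 H] [CompleteSpace H]
    (b : HilbertBasis Γ 𝕜 H) (t : Γ) {σ : Γ → Γ} (hσ : StrictMono σ) (hσ_odd : σ.Odd)
    (U S W : H →L[𝕜] H) (hU : ∀ q, U (b q) = b (q + t)) (hS : ∀ q, S (b q) = b (σ q))
    (hW : ∀ q, W (b q) = b (-q)) :
    W ∈ unitary (H →L[𝕜] H) ∧ star W = W ∧ W * U * W = star U ∧ W * S = S * W ∧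
      W ∉ closure (StarAlgebra.adjoin 𝕜 {U, S} : Set (H →L[𝕜] H)) := by
  have hWW : W * W = 1 := continuousLinearMap_ext_hilbertBasis b fun q => by simp [hW]
  have hW_star : star W = W := star_eq_of_basis_perm b (Equiv.neg Γ) hW hW
  have hWUW : star U = W * U * W :=
    star_eq_of_basis_perm b (Equiv.addRight t) hU fun q => by simp [hU, hW, add_comm]
  have hWS : W * S = S * W :=
    continuousLinearMap_ext_hilbertBasis b fun q => by simp [hS, hW, hσ_odd q]
  have hadjoin : StarAlgebra.adjoin 𝕜 {U, S} ≤ finitelyMonotoneOperators b :=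
    StarAlgebra.adjoin_le <| Set.pair_subset
      (mem_finitelyMonotoneOperators_of_strictMono b (add_left_strictMono (a := t)) hU)
      (mem_finitelyMonotoneOperators_of_strictMono b hσ hS)
  have hW_notMem := notMem_closure_finitelyMonotoneOperators_of_strictAnti b
    (fun _ _ => neg_lt_neg) hW
  have hW_unitary : W ∈ unitary (H →L[𝕜] H) := by
    simp only [Unitary.mem_iff, hW_star, hWW, and_self]
  exact ⟨hW_unitary, hW_star, hWUW.symm, hWS, fun h => hW_notMem (closure_mono hadjoin h)⟩

section InvSubring

variable (m : ℕ) [NeZero m]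

/-- `ℤ[1/m]` as a subring of `ℚ`, which makes the index set of the basis an ordered group. -/
def zInvSubring : Subring ℚ where
  carrier := zInvM m
  zero_mem' := ⟨0, 0, by simp⟩
  one_mem' := ⟨1, 0, by simp⟩
  neg_mem' := by
    rintro _ ⟨p, k, rfl⟩
    exact ⟨-p, k, by push_cast; ring⟩
  add_mem' := by
    rintro _ _ ⟨p, k, rfl⟩ ⟨p', k', rfl⟩
    have hm : (m : ℚ) ≠ 0 := NeZero.ne _
    exact ⟨p * m ^ k' + p' * m ^ k, k + k', by push_cast; rw [pow_add]; field_simp⟩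
  mul_mem' := by
    rintro _ _ ⟨p, k, rfl⟩ ⟨p', k', rfl⟩
    exact ⟨p * p', k + k', by push_cast; rw [div_mul_div_comm, pow_add]⟩

/-- The fraction `n / m` as an element of `ℤ[1/m]`. -/
def zInvFraction (n : ℕ) : zInvSubring m :=
  ⟨n / m, n, 1, by simp⟩

lemma zInvFraction_pos {n : ℕ} (hn : 0 < n) : 0 < zInvFraction m n := by
  have hm := NeZero.pos m
  change (0 : ℚ) < n / m
  positivity

/-- The family `stdBasis m`, restricted to its legitimate indices, as a Hilbert basis. -/
noncomputable def zInvBasis :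
    HilbertBasis (zInvSubring m) ℂ (lp (fun _ : ↥(zInvM m) => ℂ) 2) :=
  .ofRepr (.refl ℂ _)

variable {m}

lemma zInvBasis_apply (q : zInvSubring m) : zInvBasis m q = stdBasis m q := by
  have hq : (q : ℚ) ∈ zInvM m := q.2
  rw [stdBasis, dif_pos hq]
  exact ((zInvBasis m).repr_symm_single q).symm

lemma map_zInvBasis_of_map_stdBasis
    {T : lp (fun _ : ↥(zInvM m) => ℂ) 2 →L[ℂ] lp (fun _ : ↥(zInvM m) => ℂ) 2} {f : ℚ → ℚ}
    (hT : ∀ q ∈ zInvM m, T (stdBasis m q) = stdBasis m (f q)) {g : zInvSubring m → zInvSubring m}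
    (hg : ∀ q, (g q : ℚ) = f q) (q : zInvSubring m) : T (zInvBasis m q) = zInvBasis m (g q) := by
  rw [zInvBasis_apply, zInvBasis_apply, hT q q.2, hg]

end InvSubring

/-- Let `m ≥ 1` and `n ≥ 2` be integers with `gcd(m,n) = 1`.  Let
`U, S, W` be bounded operators on `ℓ²(ℤ[1/m])` satisfying `U e_q = e_{q+1}`,
`S e_q = e_{(n/m)q}`, and `W e_q = e_{−q}` for all `q ∈ ℤ[1/m]`.  Then `W` is a
self-adjoint unitary satisfying `W U W = U*` and `W S = S W`, and `W` does not belong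
to the norm closure of the star subalgebra of bounded operators on `ℓ²(ℤ[1/m])`
generated by `U` and `S`. -/
theorem flip_not_in_closure_of_generated_star_subalgebra
    (m n : ℕ) (hm : 1 ≤ m) (hn : 2 ≤ n) (hmn : Nat.Coprime m n)
    (U S W : lp (fun _ : ↥(zInvM m) => ℂ) 2 →L[ℂ] lp (fun _ : ↥(zInvM m) => ℂ) 2)
    (hU : ∀ q : ℚ, q ∈ zInvM m → U (stdBasis m q) = stdBasis m (q + 1))
    (hS : ∀ q : ℚ, q ∈ zInvM m → S (stdBasis m q) = stdBasis m ((n : ℚ) / (m : ℚ) * q))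
    (hW : ∀ q : ℚ, q ∈ zInvM m → W (stdBasis m q) = stdBasis m (-q)) :
    W ∈ unitary (lp (fun _ : ↥(zInvM m) => ℂ) 2 →L[ℂ] lp (fun _ : ↥(zInvM m) => ℂ) 2) ∧
    star W = W ∧
    W * U * W = star U ∧
    W * S = S * W ∧
    W ∉ closure ((StarAlgebra.adjoin ℂ
      ({U, S} : Set (lp (fun _ : ↥(zInvM m) => ℂ) 2 →L[ℂ] lp (fun _ : ↥(zInvM m) => ℂ) 2)) :
        StarSubalgebra ℂ _) : Set _) := by
  have : NeZero m := ⟨by lia⟩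
  exact flip_not_in_closure_of_generated_star_subalgebra_general (zInvBasis m) 1
    (strictMono_mul_left_of_pos (zInvFraction_pos m (by lia : 0 < n))) (mul_neg _) U S W
    (map_zInvBasis_of_map_stdBasis hU fun _ => rfl) (map_zInvBasis_of_map_stdBasis hS fun _ => rfl)
    (map_zInvBasis_of_map_stdBasis hW fun _ => rfl)
end

section
/- For every t ∈ ℝ, the following four products vanish: a₁(t)·a₁(2t) = 0, a₁(t)·b₁(2t) = 0, b₁(t)·b₁(2t) = 0, and b₁(t)·a₁(2t) = 0. -/
open Int in
/-- The 1-periodic function `a₀ : ℝ → ℝ` determined on `[0,1)` by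
`a₀(t) = 4(t − 1/2)` on `[1/2, 3/4]`, `a₀(t) = 1 − 8(t − 3/4)` on `[3/4, 7/8]`,
and `a₀(t) = 0` on `[0, 1/2) ∪ [7/8, 1)`. -/
noncomputable def rieffelA0 (t : ℝ) : ℝ :=
  if 1 / 2 ≤ fract t ∧ fract t ≤ 3 / 4 then 4 * (fract t - 1 / 2)
  else if 3 / 4 ≤ fract t ∧ fract t ≤ 7 / 8 then 1 - 8 * (fract t - 3 / 4)
  else 0

open Int in
/-- The 1-periodic function `a₁ : ℝ → ℝ` determined on `[0,1)` by
`a₁(t) = √(a₀(2t) − a₀(2t)²)` on `[3/4, 7/8]` and `a₁(t) = 0` elsewhere. -/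
noncomputable def rieffelA1 (t : ℝ) : ℝ :=
  if 3 / 4 ≤ fract t ∧ fract t ≤ 7 / 8 then
    Real.sqrt (rieffelA0 (2 * t) - rieffelA0 (2 * t) ^ 2)
  else 0

open Int in
/-- The 1-periodic function `b₁ : ℝ → ℝ` determined on `[0,1)` by
`b₁(t) = √(a₀(2t) − a₀(2t)²)` on `[1/4, 3/8]` and `b₁(t) = 0` elsewhere. -/
noncomputable def rieffelB1 (t : ℝ) : ℝ :=
  if 1 / 4 ≤ fract t ∧ fract t ≤ 3 / 8 then
    Real.sqrt (rieffelA0 (2 * t) - rieffelA0 (2 * t) ^ 2)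
  else 0

/-!
Let `E` (`rieffelArcs` below) be the set of `t` whose fractional part has second binary digit `1`
and third binary digit `0`. Doubling shifts the digits by one place, so `2 * t ∈ E` would force the
third digit of `t` to be `1`; hence `E` is disjoint from its preimage under doubling. Both `a₁` and
`b₁` are supported in `E`: their defining intervals double onto `[1/2, 3/4]`, and the endpoint `3/4`
is lost because `a₀` equals `1` there.
-/

section DoublingMap

variable {R : Type*} [Ring R] [LinearOrder R] [IsOrderedRing R] [FloorRing R] {x : R}

theorem fract_two_mul_of_two_mul_fract_lt_one (h : 2 * Int.fract x < 1) :
    Int.fract (2 * x) = 2 * Int.fract x := by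
  refine Int.fract_eq_iff.mpr
    ⟨mul_nonneg zero_le_two (Int.fract_nonneg x), h, 2 * ⌊x⌋, ?_⟩
  rw [← mul_sub, Int.self_sub_fract]
  push_cast
  rfl

theorem fract_two_mul_of_one_le_two_mul_fract (h : 1 ≤ 2 * Int.fract x) :
    Int.fract (2 * x) = 2 * Int.fract x - 1 := by
  have h_lt : 2 * Int.fract x < 1 + 1 := by
    rw [two_mul]
    exact add_lt_add (Int.fract_lt_one x) (Int.fract_lt_one x)
  refine Int.fract_eq_iff.mpr
    ⟨sub_nonneg.mpr h, sub_lt_iff_lt_add.mpr h_lt, 2 * ⌊x⌋ + 1, ?_⟩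
  rw [← sub_add, ← mul_sub, Int.self_sub_fract]
  push_cast
  rfl

end DoublingMap

/-- The points of the real line lying, modulo `1`, in the arcs `[1/4, 3/8)` and `[3/4, 7/8)`, on
which `a₁` and `b₁` are supported; encoded as the preimage of `[1/2, 3/4)` under doubling. -/
def rieffelArcs : Set ℝ :=
  {t | Int.fract (2 * t) ∈ Set.Ico (1 / 2) (3 / 4)}

theorem two_mul_notMem_rieffelArcs {t : ℝ} (ht : t ∈ rieffelArcs) : 2 * t ∉ rieffelArcs := by
  obtain ⟨h_half, h_lt⟩ : Int.fract (2 * t) ∈ Set.Ico (1 / 2) (3 / 4) := ht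
  have h_eq : Int.fract (2 * (2 * t)) = 2 * Int.fract (2 * t) - 1 :=
    fract_two_mul_of_one_le_two_mul_fract (by linarith)
  rintro ⟨h_ge, -⟩
  linarith

theorem mul_comp_two_mul_eq_zero_of_support_subset {M : Type*} [MulZeroClass M] {f g : ℝ → M}
    (hf : Function.support f ⊆ rieffelArcs) (hg : Function.support g ⊆ rieffelArcs) (t : ℝ) :
    f t * g (2 * t) = 0 := by
  by_cases ht : t ∈ rieffelArcs
  · rw [Function.notMem_support.mp fun h => two_mul_notMem_rieffelArcs ht (hg h), mul_zero]
  · rw [Function.notMem_support.mp fun h => ht (hf h), zero_mul]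

theorem rieffelA0_eq_one_of_fract_eq {t : ℝ} (ht : Int.fract t = 3 / 4) : rieffelA0 t = 1 := by
  norm_num [rieffelA0, ht]

theorem mem_rieffelArcs_of_sqrt_ne_zero {t : ℝ}
    (h_mem : Int.fract (2 * t) ∈ Set.Icc (1 / 2) (3 / 4))
    (h_sqrt : √(rieffelA0 (2 * t) - rieffelA0 (2 * t) ^ 2) ≠ 0) : t ∈ rieffelArcs := by
  refine ⟨h_mem.1, h_mem.2.lt_of_ne fun h_eq => h_sqrt ?_⟩
  rw [rieffelA0_eq_one_of_fract_eq h_eq, one_pow, sub_self, Real.sqrt_zero]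

theorem support_rieffelA1_subset : Function.support rieffelA1 ⊆ rieffelArcs := by
  intro t ht
  obtain ⟨⟨h_ge, h_le⟩, h_sqrt⟩ := ite_ne_right_iff.mp (Function.mem_support.mp ht)
  have h_eq : Int.fract (2 * t) = 2 * Int.fract t - 1 :=
    fract_two_mul_of_one_le_two_mul_fract (by linarith)
  exact mem_rieffelArcs_of_sqrt_ne_zero ⟨by linarith, by linarith⟩ h_sqrt

theorem support_rieffelB1_subset : Function.support rieffelB1 ⊆ rieffelArcs := by
  intro t ht
  obtain ⟨⟨h_ge, h_le⟩, h_sqrt⟩ := ite_ne_right_iff.mp (Function.mem_support.mp ht)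
  have h_eq : Int.fract (2 * t) = 2 * Int.fract t :=
    fract_two_mul_of_two_mul_fract_lt_one (by linarith)
  exact mem_rieffelArcs_of_sqrt_ne_zero ⟨by linarith, by linarith⟩ h_sqrt

/-- For every `t ∈ ℝ`, the four products vanish:
`a₁(t)·a₁(2t) = 0`, `a₁(t)·b₁(2t) = 0`, `b₁(t)·b₁(2t) = 0`, `b₁(t)·a₁(2t) = 0`. -/
theorem rieffel_products_vanish (t : ℝ) :
    rieffelA1 t * rieffelA1 (2 * t) = 0 ∧
    rieffelA1 t * rieffelB1 (2 * t) = 0 ∧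
    rieffelB1 t * rieffelB1 (2 * t) = 0 ∧
    rieffelB1 t * rieffelA1 (2 * t) = 0 := by
  have hA := support_rieffelA1_subset
  have hB := support_rieffelB1_subset
  exact ⟨mul_comp_two_mul_eq_zero_of_support_subset hA hA t,
    mul_comp_two_mul_eq_zero_of_support_subset hA hB t,
    mul_comp_two_mul_eq_zero_of_support_subset hB hB t,
    mul_comp_two_mul_eq_zero_of_support_subset hB hA t⟩
end

section
/- For every t ∈ ℝ, a₀(2t) − a₀(2t)² = a₁(t)² + b₁(t)² + a₁(2t)². (This is the relation φ(a₀) − φ(a₀²) = a₁² + b₁² + φ(a₁²), where φ(a)(t) = a(2t).) -/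
/-! Write `f = a₀ - a₀²`. Doubling modulo 1 carries both `[1/4, 3/8]` and `[3/4, 7/8]` onto
`[1/2, 3/4]`, so `a₁(t)² + b₁(t)²` is the part of `f(2t)` coming from the rising side of the tent
`a₀`. On the falling side `[3/4, 7/8]` one has `a₀(s) + a₀(2s) = 1`, and `x - x²` is invariant under
`x ↦ 1 - x`; hence `a₁(s)² = f(2s) = f(s)` there, and `s = 2t` gives the remaining part. The two
sides meet at the peak, where `f` vanishes. -/

section Fract

variable {R : Type*} [Ring R] [LinearOrder R] [IsStrictOrderedRing R] [FloorRing R]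

lemma fract_intCast_mul_eq_sub {n k : ℤ} {t : R} (hk : (k : R) ≤ n * Int.fract t)
    (hk' : n * Int.fract t < k + 1) : Int.fract (n * t) = n * Int.fract t - k := by
  refine Int.fract_eq_iff.mpr ⟨sub_nonneg.mpr hk, sub_lt_iff_lt_add'.mpr hk', n * ⌊t⌋ + k, ?_⟩
  push_cast
  rw [Int.fract, mul_sub]
  abel

lemma fract_two_mul_of_lt_one {t : R} (h : 2 * Int.fract t < 1) :
    Int.fract (2 * t) = 2 * Int.fract t := by
  simpa using fract_intCast_mul_eq_sub (n := 2) (k := 0) (t := t) (by simp) (by simpa using h)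

lemma fract_two_mul_of_one_le {t : R} (h : 1 ≤ 2 * Int.fract t) :
    Int.fract (2 * t) = 2 * Int.fract t - 1 := by
  have h₂ : 2 * Int.fract t < 1 + 1 := by
    simpa [one_add_one_eq_two] using mul_lt_mul_of_pos_left (Int.fract_lt_one t) two_pos
  simpa using fract_intCast_mul_eq_sub (n := 2) (k := 1) (t := t) (by simpa using h)
    (by simpa using h₂)

end Fract

lemma fract_two_mul_mem_Icc_iff {K : Type*} [Field K] [LinearOrder K] [IsStrictOrderedRing K]
    [FloorRing K] {a b t : K} (ha : 0 ≤ a) (hb : b < 1) :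
    Int.fract (2 * t) ∈ Set.Icc a b ↔
      Int.fract t ∈ Set.Icc (a / 2) (b / 2) ∨
        Int.fract t ∈ Set.Icc ((a + 1) / 2) ((b + 1) / 2) := by
  simp only [Set.mem_Icc]
  rcases lt_or_ge (2 * Int.fract t) 1 with h | h
  · rw [fract_two_mul_of_lt_one h, or_iff_left fun h' ↦ by linarith [h'.1]]
    constructor <;> rintro ⟨h₁, h₂⟩ <;> constructor <;> linarith
  · rw [fract_two_mul_of_one_le h, or_iff_right fun h' ↦ by linarith [h'.2]]
    constructor <;> rintro ⟨h₁, h₂⟩ <;> constructor <;> linarith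

lemma rieffelA0_of_mem_Icc_half {t : ℝ} (ht : Int.fract t ∈ Set.Icc (1 / 2) (3 / 4)) :
    rieffelA0 t = 4 * (Int.fract t - 1 / 2) :=
  if_pos ht

lemma rieffelA0_of_mem_Icc_three_quarters {t : ℝ}
    (ht : Int.fract t ∈ Set.Icc (3 / 4) (7 / 8)) :
    rieffelA0 t = 1 - 8 * (Int.fract t - 3 / 4) := by
  by_cases h : Int.fract t ∈ Set.Icc (1 / 2) (3 / 4)
  · have h_peak : Int.fract t = 3 / 4 := le_antisymm h.2 ht.1
    rw [rieffelA0_of_mem_Icc_half h, h_peak]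
    norm_num
  · exact (if_neg h).trans (if_pos ht)

lemma rieffelA0_of_notMem {t : ℝ} (h_rise : Int.fract t ∉ Set.Icc (1 / 2) (3 / 4))
    (h_fall : Int.fract t ∉ Set.Icc (3 / 4) (7 / 8)) : rieffelA0 t = 0 :=
  (if_neg h_rise).trans (if_neg h_fall)

lemma rieffelA0_mem_Icc (t : ℝ) : rieffelA0 t ∈ Set.Icc 0 1 := by
  unfold rieffelA0
  split_ifs with h_rise h_fall
  · constructor <;> linarith [h_rise.1, h_rise.2]
  · constructor <;> linarith [h_fall.1, h_fall.2]
  · simp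

lemma rieffelA0_sub_sq_nonneg (t : ℝ) : 0 ≤ rieffelA0 t - rieffelA0 t ^ 2 :=
  have ⟨h₀, h₁⟩ := rieffelA0_mem_Icc t
  sub_nonneg.mpr (pow_le_of_le_one h₀ h₁ two_ne_zero)

lemma rieffelA0_two_mul_of_mem_Icc {t : ℝ} (ht : Int.fract t ∈ Set.Icc (3 / 4) (7 / 8)) :
    rieffelA0 (2 * t) = 1 - rieffelA0 t := by
  have h_double : Int.fract (2 * t) = 2 * Int.fract t - 1 :=
    fract_two_mul_of_one_le (by linarith [ht.1])
  have h_rise : Int.fract (2 * t) ∈ Set.Icc (1 / 2) (3 / 4) := by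
    rw [h_double]
    constructor <;> linarith [ht.1, ht.2]
  rw [rieffelA0_of_mem_Icc_half h_rise, rieffelA0_of_mem_Icc_three_quarters ht, h_double]
  ring

lemma rieffelA1_sq (t : ℝ) :
    rieffelA1 t ^ 2 = if 3 / 4 ≤ Int.fract t ∧ Int.fract t ≤ 7 / 8 then
      rieffelA0 (2 * t) - rieffelA0 (2 * t) ^ 2 else 0 := by
  rw [rieffelA1, ite_pow, Real.sq_sqrt (rieffelA0_sub_sq_nonneg _), zero_pow two_ne_zero]

lemma rieffelB1_sq (t : ℝ) :
    rieffelB1 t ^ 2 = if 1 / 4 ≤ Int.fract t ∧ Int.fract t ≤ 3 / 8 then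
      rieffelA0 (2 * t) - rieffelA0 (2 * t) ^ 2 else 0 := by
  rw [rieffelB1, ite_pow, Real.sq_sqrt (rieffelA0_sub_sq_nonneg _), zero_pow two_ne_zero]

lemma rieffelA1_sq_add_rieffelB1_sq (t : ℝ) :
    rieffelA1 t ^ 2 + rieffelB1 t ^ 2 =
      if 1 / 2 ≤ Int.fract (2 * t) ∧ Int.fract (2 * t) ≤ 3 / 4 then
        rieffelA0 (2 * t) - rieffelA0 (2 * t) ^ 2 else 0 := by
  have h_preimage : (1 / 2 ≤ Int.fract (2 * t) ∧ Int.fract (2 * t) ≤ 3 / 4) ↔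
      (1 / 4 ≤ Int.fract t ∧ Int.fract t ≤ 3 / 8) ∨
        (3 / 4 ≤ Int.fract t ∧ Int.fract t ≤ 7 / 8) := by
    have h := fract_two_mul_mem_Icc_iff (a := 1 / 2) (b := 3 / 4) (t := t)
      (by norm_num) (by norm_num)
    norm_num only [Set.mem_Icc] at h ⊢
    exact h
  have h_disjoint : ¬((1 / 4 ≤ Int.fract t ∧ Int.fract t ≤ 3 / 8) ∧
      (3 / 4 ≤ Int.fract t ∧ Int.fract t ≤ 7 / 8)) := by
    rintro ⟨hB, hA⟩
    linarith [hB.2, hA.1]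
  rw [rieffelA1_sq, rieffelB1_sq]
  grind

lemma rieffelA1_sq_of_mem_Icc {t : ℝ} (ht : Int.fract t ∈ Set.Icc (3 / 4) (7 / 8)) :
    rieffelA1 t ^ 2 = rieffelA0 t - rieffelA0 t ^ 2 := by
  rw [rieffelA1_sq, if_pos (Set.mem_Icc.mp ht), rieffelA0_two_mul_of_mem_Icc ht]
  ring

lemma rieffelA1_sq_of_notMem_Icc {t : ℝ} (ht : Int.fract t ∉ Set.Icc (3 / 4) (7 / 8)) :
    rieffelA1 t ^ 2 = 0 :=
  (rieffelA1_sq t).trans (if_neg ht)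

lemma rieffelA0_sub_sq_eq_ite_add_rieffelA1_sq (t : ℝ) :
    rieffelA0 t - rieffelA0 t ^ 2 =
      (if 1 / 2 ≤ Int.fract t ∧ Int.fract t ≤ 3 / 4 then
        rieffelA0 t - rieffelA0 t ^ 2 else 0) + rieffelA1 t ^ 2 := by
  by_cases h_fall : Int.fract t ∈ Set.Icc (3 / 4) (7 / 8)
  · rw [rieffelA1_sq_of_mem_Icc h_fall, right_eq_add, ite_eq_right_iff]
    intro h_rise
    have h_peak : Int.fract t = 3 / 4 := le_antisymm h_rise.2 h_fall.1
    rw [rieffelA0_of_mem_Icc_three_quarters h_fall, h_peak]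
    norm_num
  · rw [rieffelA1_sq_of_notMem_Icc h_fall, add_zero, eq_comm, ite_eq_left_iff]
    intro h_rise
    rw [rieffelA0_of_notMem h_rise h_fall]
    norm_num

/-- For every `t ∈ ℝ`,
`a₀(2t) − a₀(2t)² = a₁(t)² + b₁(t)² + a₁(2t)²`.  This is the relation
`φ(a₀) − φ(a₀²) = a₁² + b₁² + φ(a₁²)`, where `φ(a)(t) = a(2t)`. -/
theorem rieffel_projection_diagonal_relation (t : ℝ) :
    rieffelA0 (2 * t) - rieffelA0 (2 * t) ^ 2
      = rieffelA1 t ^ 2 + rieffelB1 t ^ 2 + rieffelA1 (2 * t) ^ 2 := by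
  rw [rieffelA1_sq_add_rieffelB1_sq, ← rieffelA0_sub_sq_eq_ite_add_rieffelA1_sq]
end

section
/- Let k ≥ 1 and for t ∈ 𝕋 let U_t ∈ M_k(ℂ) be the diagonal matrix diag(1, t, t², …, t^{k−1}). A continuous function f : 𝕋 → M_k(ℂ) satisfies U_t f(t^k z) U_t* = f(z) for all t, z ∈ 𝕋 if and only if f is a constant diagonal matrix, i.e., there exists a diagonal matrix D ∈ M_k(ℂ) with f(z) = D for all z ∈ 𝕋. (This identifies the fixed point algebra of the action γ_t(f)(z) = U_t f(t^k z) U_t* on M_k(C(𝕋)).) -/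
/-! Conjugation by a unitary matrix `U` fixes exactly the matrices commuting with `U`. If `t` is a
primitive `k`-th root of unity, then `t^k = 1` and `U_t` has distinct eigenvalues, so each `f z`
commutes with `U_t` and is therefore diagonal. Now every conjugation by a `U_t` fixes the values of
`f`, so `f (t^k z) = f z` for all `t`, and `f` is constant because every point of the circle is a
`k`-th power. -/

open Matrix

section Diagonal

variable {ι R : Type*} [Fintype ι] [DecidableEq ι]

theorem isDiag_of_commute_diagonal [NonUnitalNonAssocCommSemiring R] [IsRightCancelMulZero R]
    {u : ι → R} (hu : Function.Injective u) {A : Matrix ι ι R} (h : Commute (diagonal u) A) :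
    A.IsDiag := by
  intro i j hij
  have hentry : u i * A i j = u j * A i j := by
    rw [← diagonal_mul, h.eq, mul_diagonal, mul_comm]
  by_contra hA
  exact hij (hu (mul_right_cancel₀ hA hentry))

theorem diagonal_mem_unitary [Semiring R] [StarRing R] {u : ι → R}
    (hu : ∀ i, u i ∈ unitary R) : diagonal u ∈ unitary (Matrix ι ι R) := by
  simp only [Unitary.mem_iff, star_eq_conjTranspose, diagonal_conjTranspose, diagonal_mul_diagonal,
    Pi.star_apply, Unitary.star_mul_self_of_mem (hu _), Unitary.mul_star_self_of_mem (hu _),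
    diagonal_one, and_self]

end Diagonal

theorem mem_unitary_of_norm_eq_one {𝕜 : Type*} [RCLike 𝕜] {z : 𝕜} (hz : ‖z‖ = 1) :
    z ∈ unitary 𝕜 := by
  rw [Unitary.mem_iff_self_mul_star, ← starRingEnd_apply, RCLike.mul_conj, hz, RCLike.ofReal_one,
    one_pow]

theorem fixedPointAlgebra_of_circle_action_on_matrix_functions_general
    {ι : Type*} [Fintype ι] [DecidableEq ι] {k : ℕ} [NeZero k] {n : ι → ℕ}
    (hn : ∀ i j, n i ≡ n j [MOD k] → i = j) (f : Circle → Matrix ι ι ℂ) :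
    (∀ t z : Circle,
        diagonal (fun j => (t : ℂ) ^ n j) * f (t ^ k * z) *
          star (diagonal (fun j => (t : ℂ) ^ n j)) = f z) ↔
    ∃ d : ι → ℂ, ∀ z : Circle, f z = diagonal d := by
  have commute_iff_conj_eq (t : Circle) (A : Matrix ι ι ℂ) :
      Commute (diagonal fun j => (t : ℂ) ^ n j) A ↔
        diagonal (fun j => (t : ℂ) ^ n j) * A * star (diagonal fun j => (t : ℂ) ^ n j) = A :=
    commute_unitary_iff_star_right_conjugate
      (diagonal_mem_unitary fun j => pow_mem (mem_unitary_of_norm_eq_one t.norm_coe) (n j))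
  constructor
  · intro hfixed
    obtain ⟨ζ, hζ⟩ := HasEnoughRootsOfUnity.exists_primitiveRoot Circle k
    have weights_injective : Function.Injective fun j => (ζ : ℂ) ^ n j := fun i j hij => by
      refine hn i j ?_
      rw [hζ.eq_orderOf, ← pow_eq_pow_iff_modEq]
      exact Circle.ext hij
    have isDiag (z : Circle) : (f z).IsDiag := by
      refine isDiag_of_commute_diagonal weights_injective ((commute_iff_conj_eq ζ _).2 ?_)
      simpa only [hζ.pow_eq_one, one_mul] using hfixed ζ z
    have eq_one (z : Circle) : f z = f 1 := by
      obtain ⟨t, rfl⟩ := (Circle.isQuotientCoveringMap_npow k).surjective z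
      rw [← hfixed t 1, mul_one, ← (isDiag (t ^ k)).diagonal_diag,
        (commute_iff_conj_eq t _).1 (commute_diagonal _ _)]
    exact ⟨(f 1).diag, fun z => by rw [eq_one, (isDiag 1).diagonal_diag]⟩
  · rintro ⟨d, hd⟩ t z
    rw [hd, hd, (commute_iff_conj_eq t _).1 (commute_diagonal _ _)]

/-- Let `k ≥ 1` and for `t ∈ 𝕋` let `U_t ∈ M_k(ℂ)` be the diagonal
matrix `diag(1, t, t², …, t^{k−1})`.  A continuous function `f : 𝕋 → M_k(ℂ)`
satisfies `U_t f(t^k z) U_t* = f(z)` for all `t, z ∈ 𝕋` if and only if `f` is a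
constant diagonal matrix, i.e. there is a diagonal matrix `D ∈ M_k(ℂ)` with
`f(z) = D` for all `z ∈ 𝕋`.  (This identifies the fixed point algebra of the action
`γ_t(f)(z) = U_t f(t^k z) U_t*` on `M_k(C(𝕋))`.) -/
theorem fixedPointAlgebra_of_circle_action_on_matrix_functions
    (k : ℕ) (hk : 1 ≤ k) (f : Circle → Matrix (Fin k) (Fin k) ℂ)
    (hf : Continuous f) :
    (∀ t z : Circle,
        Matrix.diagonal (fun j : Fin k => (t : ℂ) ^ (j : ℕ)) * f (t ^ k * z) *
          star (Matrix.diagonal (fun j : Fin k => (t : ℂ) ^ (j : ℕ))) = f z) ↔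
    ∃ d : Fin k → ℂ, ∀ z : Circle, f z = Matrix.diagonal d := by
  have : NeZero k := ⟨Nat.one_le_iff_ne_zero.1 hk⟩
  exact fixedPointAlgebra_of_circle_action_on_matrix_functions_general
    (fun i j hij => Fin.ext (hij.eq_of_lt_of_lt i.2 j.2)) f
end

section
/- Let A be a unital C*-algebra, let n ≥ 2 and m ≥ 1 be integers, and let z₀, w₀ ∈ A be unitaries with w₀* = w₀ and w₀ z₀ w₀ = z₀*. Define Z ∈ M_n(A) by Z_{1,n} = z₀^m, Z_{i+1,i} = 1 for 1 ≤ i ≤ n−1, and all other entries 0; define W ∈ M_n(A) by W_{1,1} = w₀, W_{i, n+2−i} = w₀ z₀^m for 2 ≤ i ≤ n, and all other entries 0. Then Z is a unitary, W is a self-adjoint unitary, and W Z W = Z*. (These are the matrices φ(z₀) and φ(w₀) defining the left action in the proof of Proposition 4.5.) -/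
/-!
Index the rows and columns by `ℤ/n`. Then `Z` is the permutation matrix of a translation and `W`
that of `i ↦ -i`, both with rows rescaled by unitaries. Since `-i` conjugates a translation into its
inverse, as in the dihedral group, `W * Z` and `star Z * W` have the same support; with `u = z₀ ^ m`
their nonzero entries are all equal to `w₀ * u`, because `w₀ * u = star u * w₀`.
-/

section Involution

variable {M : Type*} [Monoid M] {w : M}

theorem mul_mul_eq_iff_semiconjBy (hw : w * w = 1) {x y : M} :
    w * x * w = y ↔ SemiconjBy w x y :=
  Units.mul_inv_eq_iff_eq_mul ⟨w, w, hw, hw⟩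

theorem mul_pow_mul_of_mul_self_eq_one (hw : w * w = 1) (x : M) (m : ℕ) :
    w * x ^ m * w = (w * x * w) ^ m :=
  (Units.conj_pow ⟨w, w, hw, hw⟩ x m).symm

theorem mul_pow_mul_eq_star_pow [StarMul M] (hw : w * w = 1) {x : M} (hx : w * x * w = star x)
    (m : ℕ) : w * x ^ m * w = star (x ^ m) := by
  rw [mul_pow_mul_of_mul_self_eq_one hw, hx, star_pow]

theorem mem_unitary_iff_mul_self_eq_one [StarMul M] (hw : IsSelfAdjoint w) :
    w ∈ unitary M ↔ w * w = 1 := by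
  rw [Unitary.mem_iff, hw.star_eq, and_self]

end Involution

section MonomialMatrix

open Matrix

variable {ι R : Type*} [Fintype ι] [DecidableEq ι] [Semiring R]

/-- The monomial (generalized permutation) matrix whose row `i` has the single entry `d i`,
in column `σ i`. -/
def monomialMatrix (d : ι → R) (σ : Equiv.Perm ι) : Matrix ι ι R :=
  diagonal d * σ.permMatrix R

theorem monomialMatrix_apply (d : ι → R) (σ : Equiv.Perm ι) (i j : ι) :
    monomialMatrix d σ i j = if σ i = j then d i else 0 := by
  simp [monomialMatrix, diagonal_mul, PEquiv.toMatrix_apply, Equiv.toPEquiv_apply, eq_comm]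

theorem monomialMatrix_one : monomialMatrix (1 : ι → R) 1 = 1 := by
  simp [monomialMatrix]

theorem monomialMatrix_mul (d e : ι → R) (σ τ : Equiv.Perm ι) :
    monomialMatrix d σ * monomialMatrix e τ = monomialMatrix (d * e ∘ σ) (τ * σ) := by
  ext i k
  rw [mul_apply, Finset.sum_eq_single (σ i)]
  · simp only [monomialMatrix_apply, if_true, mul_ite, mul_zero]
    rfl
  · intro j _ hj
    simp [monomialMatrix_apply, hj.symm]
  · simp

variable [StarRing R]

theorem star_monomialMatrix (d : ι → R) (σ : Equiv.Perm ι) :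
    star (monomialMatrix d σ) = monomialMatrix (star d ∘ ⇑σ⁻¹) σ⁻¹ := by
  ext i j
  rw [star_apply, monomialMatrix_apply, monomialMatrix_apply]
  by_cases h : σ j = i
  · simp [← h]
  · have h_inv : σ⁻¹ i ≠ j := fun h' ↦ h (Equiv.Perm.inv_eq_iff_eq.1 h').symm
    simp only [if_neg h, if_neg h_inv, star_zero]

theorem monomialMatrix_mem_unitary {d : ι → R} (hd : ∀ i, d i ∈ unitary R)
    (σ : Equiv.Perm ι) : monomialMatrix d σ ∈ unitary (Matrix ι ι R) := by
  rw [Unitary.mem_iff, star_monomialMatrix, monomialMatrix_mul, monomialMatrix_mul,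
    mul_inv_cancel, inv_mul_cancel, ← monomialMatrix_one]
  constructor <;> congr 1 <;> ext i <;> simp [hd]

end MonomialMatrix

section Twisted

variable {G R : Type*} [AddCommGroup G] [Fintype G] [DecidableEq G] [Semiring R]

/-- The matrix of translation by `g`, with the entry in row `0` replaced by `u`. This is `Z` when
`G = Fin n`, `g = 1` and `u = z₀ ^ m`. -/
def twistedTranslation (g : G) (u : R) : Matrix G G R :=
  monomialMatrix (fun i ↦ if i = 0 then u else 1) (Equiv.subRight g)

variable (G) in
/-- The matrix of `i ↦ -i`, with the entry `w` in row `0` and `w * u` in all others. This is `W`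
when `G = Fin n`, `w = w₀` and `u = z₀ ^ m`. -/
def twistedReflection (w u : R) : Matrix G G R :=
  monomialMatrix (fun i ↦ if i = 0 then w else w * u) (Equiv.neg G)

variable [StarRing R] {u w : R}

theorem twistedTranslation_mem_unitary (g : G) (hu : u ∈ unitary R) :
    twistedTranslation g u ∈ unitary (Matrix G G R) :=
  monomialMatrix_mem_unitary (fun i ↦ by split_ifs; exacts [hu, one_mem _]) _

theorem twistedReflection_mem_unitary (hw : w ∈ unitary R) (hu : u ∈ unitary R) :
    twistedReflection G w u ∈ unitary (Matrix G G R) :=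
  monomialMatrix_mem_unitary (fun i ↦ by split_ifs; exacts [hw, mul_mem hw hu]) _

theorem isSelfAdjoint_twistedReflection (hw : IsSelfAdjoint w) (hwu : SemiconjBy w u (star u)) :
    IsSelfAdjoint (twistedReflection G w u) := by
  rw [IsSelfAdjoint, twistedReflection, star_monomialMatrix]
  congr 1
  ext i
  simp [apply_ite star, hw.star_eq, hwu.eq]

theorem semiconjBy_twistedReflection_twistedTranslation (g : G)
    (hwu : SemiconjBy w u (star u)) :
    SemiconjBy (twistedReflection G w u) (twistedTranslation g u)
      (star (twistedTranslation g u)) := by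
  rw [SemiconjBy, twistedReflection, twistedTranslation, star_monomialMatrix, monomialMatrix_mul,
    monomialMatrix_mul]
  congr 1
  · ext i
    have left : (if i = 0 then w else w * u) * (if -i = 0 then u else 1) = w * u := by
      simp only [neg_eq_zero]
      split_ifs <;> simp
    have right : star (if i + g = 0 then u else 1) * (if i + g = 0 then w else w * u) = w * u := by
      split_ifs <;> simp [hwu.eq]
    exact left.trans right.symm
  · ext i
    simp [sub_eq_add_neg, add_comm]

theorem matrix_implementing_flip_on_correspondence_general (g : G) (hu : u ∈ unitary R)
    (hw : w ∈ unitary R) (hws : IsSelfAdjoint w) (hwu : w * u * w = star u) :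
    twistedTranslation g u ∈ unitary (Matrix G G R) ∧
    twistedReflection G w u ∈ unitary (Matrix G G R) ∧
    IsSelfAdjoint (twistedReflection G w u) ∧
    twistedReflection G w u * twistedTranslation g u * twistedReflection G w u =
      star (twistedTranslation g u) := by
  have semiconj : SemiconjBy w u (star u) :=
    (mul_mul_eq_iff_semiconjBy ((mem_unitary_iff_mul_self_eq_one hws).1 hw)).1 hwu
  have unitary_W := twistedReflection_mem_unitary (G := G) hw hu
  have selfAdjoint_W := isSelfAdjoint_twistedReflection (G := G) hws semiconj
  have W_mul_W := (mem_unitary_iff_mul_self_eq_one selfAdjoint_W).1 unitary_W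
  exact ⟨twistedTranslation_mem_unitary g hu, unitary_W, selfAdjoint_W,
    (mul_mul_eq_iff_semiconjBy W_mul_W).2
      (semiconjBy_twistedReflection_twistedTranslation g semiconj)⟩

end Twisted

section Fin

variable {R : Type*} [Semiring R] {n : ℕ} [NeZero n]

theorem twistedTranslation_one_eq_of (u : R) :
    twistedTranslation (1 : Fin n) u = Matrix.of fun i j : Fin n =>
      if (i : ℕ) = 0 ∧ (j : ℕ) = n - 1 then u else if (i : ℕ) = (j : ℕ) + 1 then 1 else 0 := by
  ext i j
  obtain ⟨k, rfl⟩ := Nat.exists_eq_succ_of_ne_zero (NeZero.ne n)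
  rw [twistedTranslation, monomialMatrix_apply, Equiv.subRight_apply, Matrix.of_apply]
  by_cases hi : i = 0
  · subst hi
    have wrap : (0 : Fin (k + 1)) - 1 = j ↔ (j : ℕ) = k := by
      rw [zero_sub, Fin.ext_iff, Fin.coe_neg_one, eq_comm]
    simp [wrap, -zero_sub]
  · have pos : (i : ℕ) ≠ 0 := Fin.val_ne_zero_iff.2 hi
    have shift : i - 1 = j ↔ (i : ℕ) = j + 1 := by
      rw [Fin.ext_iff, Fin.val_sub_one_of_ne_zero hi]
      lia
    simp only [hi, pos, shift, false_and, if_false]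

theorem twistedReflection_fin_eq_of (w u : R) :
    twistedReflection (Fin n) w u = Matrix.of fun i j : Fin n =>
      if (i : ℕ) = 0 ∧ (j : ℕ) = 0 then w
      else if 1 ≤ (i : ℕ) ∧ (i : ℕ) + (j : ℕ) = n then w * u else 0 := by
  ext i j
  rw [twistedReflection, monomialMatrix_apply, Equiv.neg_apply, Matrix.of_apply]
  by_cases hi : i = 0
  · subst hi
    have fixed : -(0 : Fin n) = j ↔ (j : ℕ) = 0 := by
      rw [neg_zero, eq_comm, Fin.val_eq_zero_iff]
    simp [fixed, -neg_zero]
  · have pos : (i : ℕ) ≠ 0 := Fin.val_ne_zero_iff.2 hi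
    have reflect : -i = j ↔ 1 ≤ (i : ℕ) ∧ (i : ℕ) + j = n := by
      rw [Fin.ext_iff, Fin.val_neg, if_neg hi]
      lia
    simp only [hi, pos, reflect, false_and, if_false]

end Fin

/-- Let `A` be a unital C*-algebra, `n ≥ 2`, `m ≥ 1`, and let
`z₀, w₀ ∈ A` be unitaries with `w₀* = w₀` and `w₀ z₀ w₀ = z₀*`.  Define
`Z ∈ M_n(A)` by `Z_{1,n} = z₀^m`, `Z_{i+1,i} = 1` for `1 ≤ i ≤ n−1`, other entries
`0`; define `W ∈ M_n(A)` by `W_{1,1} = w₀`, `W_{i,n+2−i} = w₀ z₀^m` for `2 ≤ i ≤ n`,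
other entries `0` (indices here are 1-based; below they are 0-based, so the
conditions become `Z_{0,n-1} = z₀^m`, `Z_{i+1,i} = 1`, `W_{0,0} = w₀` and
`W_{r,c} = w₀ z₀^m` for `r + c = n`, `r ≥ 1`).  Then `Z` is a unitary, `W` is a
self-adjoint unitary, and `W Z W = Z*`. -/
theorem matrix_implementing_flip_on_correspondence
    {A : Type*} [NormedRing A] [StarRing A] [CStarRing A] [NormedAlgebra ℂ A]
    [StarModule ℂ A] [CompleteSpace A]
    (n m : ℕ) (hn : 2 ≤ n) (hm : 1 ≤ m)
    (z₀ w₀ : A) (hz : z₀ ∈ unitary A) (hw : w₀ ∈ unitary A)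
    (hws : star w₀ = w₀) (hcov : w₀ * z₀ * w₀ = star z₀)
    (Z W : Matrix (Fin n) (Fin n) A)
    (hZ : Z = Matrix.of fun i j : Fin n =>
      if (i : ℕ) = 0 ∧ (j : ℕ) = n - 1 then z₀ ^ m
      else if (i : ℕ) = (j : ℕ) + 1 then 1 else 0)
    (hW : W = Matrix.of fun i j : Fin n =>
      if (i : ℕ) = 0 ∧ (j : ℕ) = 0 then w₀
      else if 1 ≤ (i : ℕ) ∧ (i : ℕ) + (j : ℕ) = n then w₀ * z₀ ^ m else 0) :
    Z ∈ unitary (Matrix (Fin n) (Fin n) A) ∧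
    W ∈ unitary (Matrix (Fin n) (Fin n) A) ∧
    star W = W ∧
    W * Z * W = star Z := by
  have : NeZero n := ⟨by lia⟩
  rw [hZ, hW, ← twistedTranslation_one_eq_of, ← twistedReflection_fin_eq_of]
  exact matrix_implementing_flip_on_correspondence_general 1 (pow_mem hz m) hw hws
    (mul_pow_mul_eq_star_pow ((mem_unitary_iff_mul_self_eq_one hws).1 hw) hcov m)
end

section
/- Let A be a unital C*-algebra containing a unitary z and elements S₁, …, S_n (n ≥ 2, m ≥ 1) satisfying S_i* S_j = δ_{ij}·1, Σ_{i=1}^n S_i S_i* = 1, z S_i = S_{i+1} for 1 ≤ i ≤ n−1, and z S_n = S₁ z^m. If k ≥ 1 is an integer with gcd(k, n) = 1, then Σ_{q=1}^{n} z^{(q−1)k} S₁ S₁* z^{−(q−1)k} = 1; equivalently, the elements S̃_q = z^{(q−1)k} S₁ (q = 1, …, n) satisfy Σ_{q=1}^n S̃_q S̃_q* = 1. -/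
/-!
Write `s = S₁`. The shift relations give `z ^ i * s = Sᵢ₊₁` for `i < n`, and the last one gives
`z ^ n * s = s * z ^ m`. As `z ^ m` is a coisometry, it disappears from the range projection, so
`l ↦ z ^ l * s * star s * star (z ^ l)` is periodic of period `n` and runs through the range
projections of the `Sᵢ` over one period. Multiplication by `k` permutes the residues modulo `n`.
-/

theorem sum_range_mul_of_periodic_of_coprime {M : Type*} [AddCommMonoid M] {f : ℕ → M} {n k : ℕ}
    (hf : Function.Periodic f n) (hkn : k.Coprime n) :
    ∑ q ∈ Finset.range n, f (q * k) = ∑ q ∈ Finset.range n, f q := by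
  have maps : Set.MapsTo (fun q ↦ q * k % n) (Finset.range n) (Finset.range n) := fun q hq ↦
    Finset.mem_coe.2 <| Finset.mem_range.2 <|
      Nat.mod_lt _ (Nat.zero_lt_of_lt (Finset.mem_range.1 hq))
  have inj : Set.InjOn (fun q ↦ q * k % n) (Finset.range n) := fun a ha b hb hab ↦
    (Nat.ModEq.cancel_right_of_coprime hkn.symm hab).eq_of_lt_of_lt
      (Finset.mem_range.1 ha) (Finset.mem_range.1 hb)
  exact Finset.sum_nbij (fun q ↦ q * k % n) maps inj
    (Finset.surjOn_of_injOn_of_card_le _ maps inj le_rfl) fun q _ ↦ (hf.map_mod_nat _).symm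

theorem pow_mul_zero_eq_of_shift {A : Type*} [Monoid A] {n : ℕ} {z : A} {S : Fin (n + 1) → A}
    (hshift : ∀ i : Fin n, z * S i.castSucc = S i.succ) (i : Fin (n + 1)) :
    z ^ (i : ℕ) * S 0 = S i := by
  induction i using Fin.induction with
  | zero => simp
  | succ i ih =>
    rw [← hshift, ← ih, Fin.val_succ, Fin.val_castSucc, pow_succ', mul_assoc]

theorem mul_mul_star_mul_of_coisometry {A : Type*} [Monoid A] [StarMul A] {u : A}
    (hu : u * star u = 1) (x : A) : x * u * star (x * u) = x * star x := by
  rw [star_mul, mul_assoc, ← mul_assoc u, hu, one_mul]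

theorem periodic_pow_mul_mul_star {A : Type*} [Monoid A] [StarMul A] {n : ℕ} {z s u : A}
    (hu : u * star u = 1) (hs : z ^ n * s = s * u) :
    Function.Periodic (fun l ↦ z ^ l * s * star (z ^ l * s)) n := fun l ↦ by
  simp only [pow_add, mul_assoc _ _ s, hs]
  rw [← mul_assoc, mul_mul_star_mul_of_coisometry hu]

theorem sum_translates_of_range_projection_eq_one_general {A : Type*} [Semiring A] [StarMul A]
    {n k : ℕ} {z u : A} {S : Fin (n + 1) → A} (hu : u * star u = 1)
    (hshift : ∀ i : Fin n, z * S i.castSucc = S i.succ)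
    (hlast : z * S (Fin.last n) = S 0 * u) (hkn : k.Coprime (n + 1)) :
    ∑ q ∈ Finset.range (n + 1), z ^ (q * k) * S 0 * star (S 0) * star (z ^ (q * k)) =
      ∑ i, S i * star (S i) := by
  have hpow := pow_mul_zero_eq_of_shift hshift
  have hperiod : z ^ (n + 1) * S 0 = S 0 * u := by
    rw [← hlast, ← hpow (Fin.last n), Fin.val_last, pow_succ', mul_assoc]
  calc
    _ = ∑ q ∈ Finset.range (n + 1), z ^ (q * k) * S 0 * star (z ^ (q * k) * S 0) := by
      simp only [star_mul, mul_assoc]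
    _ = ∑ q ∈ Finset.range (n + 1), z ^ q * S 0 * star (z ^ q * S 0) :=
      sum_range_mul_of_periodic_of_coprime (periodic_pow_mul_mul_star hu hperiod) hkn
    _ = ∑ i, S i * star (S i) := by
      simp only [Finset.sum_range, hpow]

/-- Let `A` be a unital C*-algebra containing a unitary `z` and elements
`S₁, …, S_n` (`n ≥ 2`, `m ≥ 1`) satisfying `S_i* S_j = δ_{ij}·1`, `Σ S_i S_i* = 1`,
`z S_i = S_{i+1}` for `1 ≤ i ≤ n−1`, and `z S_n = S₁ z^m` (the defining relations of
`O_{(m,n)}(𝕋)`; indices are 0-based below, so `S₁ = S 0`).  If `k ≥ 1` is an integer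
with `gcd(k, n) = 1`, then `Σ_{q=1}^{n} z^{(q−1)k} S₁ S₁* z^{−(q−1)k} = 1`;
here `z^{−l} = (z*)^l = star (z^l)` since `z` is unitary.  Equivalently, the elements
`S̃_q = z^{(q−1)k} S₁` (`q = 1, …, n`) satisfy `Σ_{q=1}^n S̃_q S̃_q* = 1`. -/
theorem sum_translates_of_range_projection_eq_one
    {A : Type*} [NormedRing A] [StarRing A] [CStarRing A] [NormedAlgebra ℂ A]
    [StarModule ℂ A] [CompleteSpace A]
    (n m : ℕ) (hn : 2 ≤ n) (hm : 1 ≤ m)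
    (z : A) (hz : z ∈ unitary A) (S : Fin n → A)
    (hortho : ∀ i j : Fin n, star (S i) * S j = if i = j then 1 else 0)
    (hsum : ∑ i : Fin n, S i * star (S i) = 1)
    (hshift : ∀ i : Fin n, ∀ h : (i : ℕ) + 1 < n, z * S i = S ⟨(i : ℕ) + 1, h⟩)
    (hlast : z * S ⟨n - 1, by omega⟩ = S ⟨0, by omega⟩ * z ^ m)
    (k : ℕ) (hk : 1 ≤ k) (hkn : Nat.Coprime k n) :
    ∑ q ∈ Finset.range n,
        z ^ (q * k) * S ⟨0, by omega⟩ * star (S ⟨0, by omega⟩) * star (z ^ (q * k))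
      = 1 := by
  obtain ⟨n, rfl⟩ := Nat.exists_eq_add_one.2 (Nat.zero_lt_of_lt hn)
  exact (sum_translates_of_range_projection_eq_one_general
    (Unitary.mul_star_self_of_mem (pow_mem hz m)) (fun i ↦ hshift i.castSucc i.succ.isLt)
    hlast hkn).trans hsum
end

section
/- Let A be a unital C*-algebra containing a unitary z and an isometry S₁ satisfying S₁* z^n S₁ = z^m, where m ≥ 1, n ≥ 2 are integers with gcd(m, n) = 1. If k ≥ 1 divides n, then z belongs to the star subalgebra of A generated by z^k and S₁. -/
/-!
Compressing `z ^ n`, a power of `z ^ k`, by `S₁` produces `z ^ m`. The unitaries lying in a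
star subalgebra form a group, so Bézout's identity turns `z ^ m` and `z ^ k` into
`z ^ gcd m k`. Since `k` divides `n`, coprimality gives `gcd m k = 1`.
-/

theorem pow_gcd_mem {G H : Type*} [Group G] [SetLike H G] [SubgroupClass H G] {K : H} {g : G}
    {a b : ℕ} (ha : g ^ a ∈ K) (hb : g ^ b ∈ K) : g ^ a.gcd b ∈ K := by
  have bezout : g ^ a.gcd b = (g ^ a) ^ a.gcdA b * (g ^ b) ^ a.gcdB b := by
    rw [← zpow_natCast, Nat.gcd_eq_gcd_ab, zpow_add, zpow_mul, zpow_mul, zpow_natCast,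
      zpow_natCast]
  exact bezout ▸ mul_mem (zpow_mem ha _) (zpow_mem hb _)

section StarMonoid

variable {M S : Type*} [Monoid M] [StarMul M] [SetLike S M] [SubmonoidClass S M]
  [StarMemClass S M]

/-- The group of unitaries of `M` lying in the star-closed submonoid `s`, encoded as a subgroup of
`unitary M` so that group-theoretic facts apply to the unitaries of `s`. -/
def unitariesIn (s : S) : Subgroup (unitary M) where
  carrier := {u | (u : M) ∈ s}
  mul_mem' hu hv := mul_mem hu hv
  one_mem' := one_mem s
  inv_mem' hu := star_mem hu

theorem pow_gcd_mem_of_mem_unitary {s : S} {z : M} (hz : z ∈ unitary M) {a b : ℕ}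
    (ha : z ^ a ∈ s) (hb : z ^ b ∈ s) : z ^ a.gcd b ∈ s :=
  pow_gcd_mem (K := unitariesIn s) (g := ⟨z, hz⟩) ha hb

theorem star_mul_pow_mul_mem_of_dvd {s : S} {z x : M} {k n : ℕ} (hz : z ^ k ∈ s) (hx : x ∈ s)
    (hkn : k ∣ n) : star x * z ^ n * x ∈ s := by
  obtain ⟨c, rfl⟩ := hkn
  rw [pow_mul]
  exact mul_mem (mul_mem (star_mem hx) (pow_mem hz c)) hx

end StarMonoid

theorem z_mem_starSubalgebra_adjoin_zPow_S1_general {R A : Type*} [CommSemiring R] [StarRing R]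
    [Semiring A] [StarRing A] [Algebra R A] [StarModule R A] {m n k : ℕ} {z S₁ : A}
    (hz : z ∈ unitary A) (hrel : star S₁ * z ^ n * S₁ = z ^ m) (hkn : k ∣ n) :
    z ^ m.gcd k ∈ StarAlgebra.adjoin R ({z ^ k, S₁} : Set A) := by
  have hzk : z ^ k ∈ StarAlgebra.adjoin R ({z ^ k, S₁} : Set A) :=
    StarAlgebra.subset_adjoin R _ (Set.mem_insert _ _)
  have hS₁ : S₁ ∈ StarAlgebra.adjoin R ({z ^ k, S₁} : Set A) :=
    StarAlgebra.subset_adjoin R _ (Set.mem_insert_of_mem _ rfl)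
  have hzm : z ^ m ∈ StarAlgebra.adjoin R ({z ^ k, S₁} : Set A) :=
    hrel ▸ star_mul_pow_mul_mem_of_dvd hzk hS₁ hkn
  exact pow_gcd_mem_of_mem_unitary hz hzm hzk

/-- Let `A` be a unital C*-algebra containing a unitary `z` and an
isometry `S₁` satisfying `S₁* z^n S₁ = z^m`, where `m ≥ 1`, `n ≥ 2` are integers with
`gcd(m, n) = 1`.  If `k ≥ 1` divides `n`, then `z` belongs to the star subalgebra of
`A` generated by `z^k` and `S₁`. -/
theorem z_mem_starSubalgebra_adjoin_zPow_S1
    {A : Type*} [NormedRing A] [StarRing A] [CStarRing A] [NormedAlgebra ℂ A]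
    [StarModule ℂ A] [CompleteSpace A]
    (m n : ℕ) (hm : 1 ≤ m) (hn : 2 ≤ n) (hmn : Nat.Coprime m n)
    (z S₁ : A) (hz : z ∈ unitary A) (hiso : star S₁ * S₁ = 1)
    (hrel : star S₁ * z ^ n * S₁ = z ^ m)
    (k : ℕ) (hk : 1 ≤ k) (hdvd : k ∣ n) :
    z ∈ StarAlgebra.adjoin ℂ ({z ^ k, S₁} : Set A) := by
  have hmk : m.gcd k = 1 := hmn.coprime_dvd_right hdvd
  simpa only [hmk, pow_one] using z_mem_starSubalgebra_adjoin_zPow_S1_general hz hrel hdvd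
end
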